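/- arXiv:1611.01593 — 3 statements merged into one kernel-verified Lean document; each statement's English description precedes it below -/
import Mathlib

section
/- The only commutator Lipschitz functions on the whole plane are affine: Let f : ℂ → ℂ be continuous and suppose there exists C ≥ 0 such that for every complex Hilbert space H, every bounded normal operator N on H and every bounded linear operator R on H, ‖f(N)R − Rf(N)‖ ≤ C·‖NR − RN‖. Then there exist a, b ∈ ℂ such that f(z) = a·z + b for all z ∈ ℂ. -/
open Complex in
theorem aux_int_exp (k : ℤ) :
    ∫ t in (0:ℝ)..1, Complex.exp (2 * Real.pi * I * k * t) = if k = 0 then 1 else 0 := by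
  split_ifs with h
  · subst h; simp
  · rw [integral_exp_mul_complex (by simp [h, Real.pi_ne_zero])]
    have : Complex.exp (2 * Real.pi * I * k * (1:ℝ)) = 1 := by
      rw [Complex.exp_eq_one_iff]; exact ⟨k, by push_cast; ring⟩
    rw [this]; simp

open Complex in
theorem aux_parseval {n : ℕ} (k : Fin n → ℤ) (hk : Function.Injective k) (u : Fin n → ℂ) :
    ∫ t in (0:ℝ)..1, ‖∑ i, u i * Complex.exp (2 * Real.pi * I * k i * t)‖ ^ 2 = ∑ i, ‖u i‖ ^ 2 := by
  have key : ∀ t : ℝ, (((‖∑ i, u i * Complex.exp (2 * Real.pi * I * k i * t)‖ ^ 2 : ℝ)) : ℂ)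
      = ∑ i, ∑ j, (u i * (starRingEnd ℂ) (u j)) *
          Complex.exp (2 * Real.pi * I * ((k i - k j : ℤ) : ℂ) * t) := by
    intro t
    push_cast
    rw [← Complex.mul_conj', map_sum, Finset.sum_mul_sum]
    refine Finset.sum_congr rfl fun i _ => Finset.sum_congr rfl fun j _ => ?_
    rw [map_mul, ← Complex.exp_conj, mul_mul_mul_comm, ← Complex.exp_add]
    congr 2
    simp only [map_mul, Complex.conj_ofReal, Complex.conj_I, map_intCast, map_ofNat]
    ring
  have : ((∫ t in (0:ℝ)..1, ‖∑ i, u i * Complex.exp (2 * Real.pi * I * k i * t)‖ ^ 2 : ℝ) : ℂ)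
      = ((∑ i, ‖u i‖ ^ 2 : ℝ) : ℂ) := by
    rw [← intervalIntegral.integral_ofReal]
    simp_rw [key]
    rw [intervalIntegral.integral_finsetSum]
    swap
    · intro i _
      apply Continuous.intervalIntegrable
      fun_prop
    rw [Complex.ofReal_sum]
    refine Finset.sum_congr rfl fun i _ => ?_
    rw [intervalIntegral.integral_finsetSum]
    swap
    · intro i _
      apply Continuous.intervalIntegrable
      fun_prop
    rw [Finset.sum_eq_single i]
    · rw [intervalIntegral.integral_const_mul, aux_int_exp]
      simp [Complex.mul_conj']
    · intro j _ hj
      rw [intervalIntegral.integral_const_mul, aux_int_exp, if_neg, mul_zero]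
      intro h
      exact hj (hk (by omega))
    · simp
  exact_mod_cast this

open Complex in
theorem aux_hilbert {n : ℕ} (u v : Fin n → ℂ) :
    2 * ‖∑ i : Fin n, ∑ j : Fin n, u i * (I / (Real.pi * ((i:ℕ) - (j:ℕ) + 1/2 : ℝ) : ℝ)) * v j‖
      ≤ ∑ i, ‖u i‖ ^ 2 + ∑ j, ‖v j‖ ^ 2 := by
  have hI : ∀ i j : Fin n, (I / (Real.pi * ((i:ℕ) - (j:ℕ) + 1/2 : ℝ) : ℝ))
      = ∫ t in (0:ℝ)..1, Complex.exp (Real.pi * I * (2 * ((i:ℕ) - (j:ℕ) : ℂ) + 1) * t) := by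
    intro i j
    have h2 : (2 * (((i:ℕ):ℂ) - ((j:ℕ):ℂ)) + 1 : ℂ) ≠ 0 := by
      have : (2 * (((i:ℕ):ℤ) - ((j:ℕ):ℤ)) + 1 : ℤ) ≠ 0 := by omega
      exact_mod_cast this
    have hpi : (Real.pi : ℂ) ≠ 0 := by exact_mod_cast Real.pi_ne_zero
    rw [integral_exp_mul_complex (by simp [h2, Real.pi_ne_zero])]
    have : Complex.exp (Real.pi * I * (2 * ((i:ℕ) - (j:ℕ) : ℂ) + 1) * (1:ℝ)) = -1 := by
      have e : (Real.pi * I * (2 * ((i:ℕ) - (j:ℕ) : ℂ) + 1) * (1:ℝ) : ℂ)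
        = Real.pi * I + ((((i:ℕ):ℤ) - ((j:ℕ):ℤ) : ℤ) : ℂ) * (2 * Real.pi * I) := by
        push_cast; ring
      rw [e, Complex.exp_add, Complex.exp_pi_mul_I, Complex.exp_int_mul_two_pi_mul_I, mul_one]
    rw [this]
    have h3 : (Real.pi * ((i:ℕ) - (j:ℕ) + 1/2 : ℝ) : ℂ) ≠ 0 := by
      refine mul_ne_zero hpi ?_
      push_cast
      intro h; apply h2; linear_combination 2 * h
    push_cast at h3 ⊢
    rw [div_eq_div_iff h3 (by simp [h2, hpi])]
    simp
    linear_combination (Real.pi * (2 * ((i:ℕ) - (j:ℕ) : ℂ) + 1)) * I_mul_I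
  set p : ℝ → ℂ := fun t => ∑ i : Fin n, u i * Complex.exp (2 * Real.pi * I * (((i:ℕ):ℤ):ℂ) * t)
    with hp
  set q : ℝ → ℂ := fun t => ∑ j : Fin n, v j * Complex.exp (2 * Real.pi * I * ((-((j:ℕ):ℤ):ℤ):ℂ) * t)
    with hq
  have hpc : Continuous p := by fun_prop
  have hqc : Continuous q := by fun_prop
  have hpp := aux_parseval (fun i : Fin n => ((i:ℕ):ℤ)) (fun a b h => by
    apply Fin.ext; simpa using h) u
  have hqq := aux_parseval (fun i : Fin n => -((i:ℕ):ℤ)) (fun a b h => by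
    apply Fin.ext; simpa using h) v
  have hsum : ∑ i : Fin n, ∑ j : Fin n, u i * (I / (Real.pi * ((i:ℕ) - (j:ℕ) + 1/2 : ℝ) : ℝ)) * v j
      = ∫ t in (0:ℝ)..1, p t * q t * Complex.exp (Real.pi * t * I) := by
    have key : ∀ t : ℝ, p t * q t * Complex.exp (Real.pi * t * I) = ∑ i : Fin n, ∑ j : Fin n,
       (u i * v j) * Complex.exp (Real.pi * I * (2 * ((i:ℕ) - (j:ℕ) : ℂ) + 1) * t) := by
      intro t
      simp only [hp, hq]
      rw [Finset.sum_mul_sum, Finset.sum_mul]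
      refine Finset.sum_congr rfl fun i _ => ?_
      rw [Finset.sum_mul]
      refine Finset.sum_congr rfl fun j _ => ?_
      rw [mul_mul_mul_comm, mul_assoc, ← Complex.exp_add, ← Complex.exp_add]
      congr 2
      push_cast
      ring
    simp_rw [key]
    rw [intervalIntegral.integral_finsetSum]
    swap
    · intro i _
      apply Continuous.intervalIntegrable
      fun_prop
    refine Finset.sum_congr rfl fun i _ => ?_
    rw [intervalIntegral.integral_finsetSum]
    swap
    · intro i _
      apply Continuous.intervalIntegrable
      fun_prop
    refine Finset.sum_congr rfl fun j _ => ?_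
    rw [intervalIntegral.integral_const_mul, hI]
    ring
  rw [hsum, ← hpp, ← hqq]
  rw [← intervalIntegral.integral_add (Continuous.intervalIntegrable (by fun_prop) _ _)
    (Continuous.intervalIntegrable (by fun_prop) _ _)]
  have h1 : ‖∫ t in (0:ℝ)..1, p t * q t * Complex.exp (Real.pi * t * I)‖
      ≤ ∫ t in (0:ℝ)..1, (‖p t‖ ^ 2 + ‖q t‖ ^ 2) / 2 := by
    apply intervalIntegral.norm_integral_le_of_norm_le zero_le_one
    · refine Filter.Eventually.of_forall fun t _ => ?_
      rw [norm_mul, norm_mul]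
      have : ‖Complex.exp (Real.pi * t * I)‖ = 1 := by
        exact_mod_cast Complex.norm_exp_ofReal_mul_I (Real.pi * t)
      rw [this]
      nlinarith [sq_nonneg (‖p t‖ - ‖q t‖)]
    · apply Continuous.intervalIntegrable
      fun_prop
  rw [intervalIntegral.integral_div] at h1
  change _ ≤ ∫ t in (0:ℝ)..1, (‖p t‖ ^ 2 + ‖q t‖ ^ 2)
  linarith

open Matrix in
theorem aux_cfc_diag {ι : Type} [Fintype ι] [DecidableEq ι] (f : ℂ → ℂ) (hf : Continuous f)
    (z : ι → ℂ) :
    IsStarNormal (toEuclideanCLM (n := ι) (𝕜 := ℂ) (diagonal z)) ∧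
    cfc f (toEuclideanCLM (n := ι) (𝕜 := ℂ) (diagonal z))
      = toEuclideanCLM (n := ι) (𝕜 := ℂ) (diagonal (fun i => f (z i))) := by
  let φ : (ι → ℂ) →⋆ₐ[ℂ] (EuclideanSpace ℂ ι →L[ℂ] EuclideanSpace ℂ ι) :=
    { ((toEuclideanCLM (n := ι) (𝕜 := ℂ)).toAlgEquiv.toAlgHom).comp (diagonalAlgHom ℂ) with
      map_star' := by
        intro x
        change toEuclideanCLM (n := ι) (𝕜 := ℂ) (diagonal (star x)) =
          star (toEuclideanCLM (n := ι) (𝕜 := ℂ) (diagonal x))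
        rw [← map_star]
        congr 1
        rw [star_eq_conjTranspose, diagonal_conjTranspose] }
  have hφ : ∀ x, φ x = toEuclideanCLM (n := ι) (𝕜 := ℂ) (diagonal x) := fun x => rfl
  have hc : Continuous φ := φ.toAlgHom.toLinearMap.continuous_of_finiteDimensional
  have hn : IsStarNormal z := ⟨mul_comm _ _⟩
  have hN : IsStarNormal (φ z) := ⟨by
    rw [← map_star]; exact (Commute.all (star z) z).map φ⟩
  refine ⟨hN, ?_⟩
  have h := φ.map_cfc f z hf.continuousOn hc hn hN
  rw [hφ, hφ] at h
  rw [← h, cfc_map_pi (S := ℂ) f z hf.continuousOn hn (fun i => ⟨mul_comm _ _⟩)]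
  congr 2
  ext i
  have := cfc_algebraMap (A := ℂ) (z i) f
  simpa using this

set_option maxHeartbeats 2000000 in
open Matrix in
theorem aux_schur (f : ℂ → ℂ) (hf : Continuous f) (C : ℝ) (hC : 0 ≤ C)
    (hyp : ∀ (H : Type) [NormedAddCommGroup H] [InnerProductSpace ℂ H] [CompleteSpace H]
      (N R : H →L[ℂ] H), IsStarNormal N →
      ‖cfc f N * R - R * cfc f N‖ ≤ C * ‖N * R - R * N‖) {n : ℕ} (x y : Fin n → ℂ)
    (hxy : ∀ i j, x i ≠ y j) (A : Matrix (Fin n) (Fin n) ℂ)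
    (hA : ∀ u v : Fin n → ℂ, 2 * ‖∑ i, ∑ j, u i * A i j * v j‖
      ≤ ∑ i, ‖u i‖ ^ 2 + ∑ j, ‖v j‖ ^ 2) :
    ‖∑ i, ∑ j, A i j * ((f (x i) - f (y j)) / (x i - y j))‖ ≤ C * n := by
  let Φ := toEuclideanCLM (n := Fin n ⊕ Fin n) (𝕜 := ℂ)
  let z : Fin n ⊕ Fin n → ℂ := Sum.elim x y
  let B : Matrix (Fin n ⊕ Fin n) (Fin n ⊕ Fin n) ℂ :=
    fromBlocks 0 (Matrix.of fun i j => A i j / (x i - y j)) 0 0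
  obtain ⟨hN, hcfc⟩ := aux_cfc_diag f hf z
  have h := hyp _ (Φ (diagonal z)) (Φ B) hN
  rw [hcfc] at h
  change ‖Φ _ * _ - _ * Φ _‖ ≤ _ at h
  rw [← map_mul, ← map_mul, ← map_mul, ← map_mul, ← map_sub, ← map_sub] at h
  have e1 : diagonal z * B - B * diagonal z = fromBlocks 0 A 0 0 := by
    ext (i | i) (j | j) <;> simp [B, z]
    have := sub_ne_zero.2 (hxy i j)
    field_simp
  have e2 : diagonal (fun i => f (z i)) * B - B * diagonal (fun i => f (z i))
      = fromBlocks 0 (Matrix.of fun i j => A i j * ((f (x i) - f (y j)) / (x i - y j))) 0 0 := by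
    ext (i | i) (j | j) <;> simp [B, z]
    have := sub_ne_zero.2 (hxy i j)
    field_simp
  rw [e1, e2] at h
  have hin : ∀ (M : Matrix (Fin n) (Fin n) ℂ) (a b : EuclideanSpace ℂ (Fin n ⊕ Fin n)),
      inner ℂ a (Φ (fromBlocks 0 M 0 0) b) =
        ∑ i, ∑ j, (starRingEnd ℂ) (a (Sum.inl i)) * M i j * b (Sum.inr j) := by
    intro M a b
    simp only [PiLp.inner_apply, Fintype.sum_sum_type, Φ, ofLp_toEuclideanCLM, mulVec, dotProduct]
    simp [Finset.mul_sum, mul_assoc, mul_comm, mul_left_comm]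
  have hn1 : ‖Φ (fromBlocks 0 A 0 0)‖ ≤ 1 := by
    refine ContinuousLinearMap.opNorm_le_bound _ zero_le_one fun b => ?_
    rw [one_mul]
    set w := Φ (fromBlocks 0 A 0 0) b with hw
    have h1 : (‖w‖ ^ 2 : ℝ) = ‖(inner ℂ w w : ℂ)‖ := by
      rw [inner_self_eq_norm_sq_to_K]; simp
    have h2 := hA (fun i => (starRingEnd ℂ) (w (Sum.inl i))) (fun j => b (Sum.inr j))
    rw [← hin, ← hw, ← h1] at h2
    have h3 : ∀ c : EuclideanSpace ℂ (Fin n ⊕ Fin n), ‖c‖ ^ 2 =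
      ∑ i, ‖c (Sum.inl i)‖ ^ 2 + ∑ i, ‖c (Sum.inr i)‖ ^ 2 := by
      intro c
      rw [EuclideanSpace.norm_sq_eq, Fintype.sum_sum_type]
    have h4 := h3 w
    have h5 := h3 b
    have h6 : 0 ≤ ∑ i, ‖w (Sum.inr i)‖ ^ 2 := Finset.sum_nonneg fun i _ => sq_nonneg _
    have h7 : 0 ≤ ∑ i, ‖b (Sum.inl i)‖ ^ 2 := Finset.sum_nonneg fun i _ => sq_nonneg _
    simp only [RCLike.norm_conj] at h2
    refine le_of_sq_le_sq ?_ (norm_nonneg _)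
    linarith
  set M : Matrix (Fin n) (Fin n) ℂ :=
    Matrix.of fun i j => A i j * ((f (x i) - f (y j)) / (x i - y j)) with hM
  let a : EuclideanSpace ℂ (Fin n ⊕ Fin n) := WithLp.toLp 2 (Sum.elim (fun _ => 1) (fun _ => 0))
  let b : EuclideanSpace ℂ (Fin n ⊕ Fin n) := WithLp.toLp 2 (Sum.elim (fun _ => 0) (fun _ => 1))
  have ha : ‖a‖ = √ n := by
    rw [EuclideanSpace.norm_eq, Fintype.sum_sum_type]; simp [a]
  have hb : ‖b‖ = √ n := by
    rw [EuclideanSpace.norm_eq, Fintype.sum_sum_type]; simp [b]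
  have h8 := hin M a b
  have h9 : ∑ i, ∑ j, (starRingEnd ℂ) (a (Sum.inl i)) * M i j * b (Sum.inr j) = 
    ∑ i, ∑ j, A i j * ((f (x i) - f (y j)) / (x i - y j)) := by
    simp [a, b, hM]
  rw [← h9, ← h8]
  calc _ ≤ ‖a‖ * ‖Φ (fromBlocks 0 M 0 0) b‖ := norm_inner_le_norm _ _
    _ ≤ ‖a‖ * (C * ‖b‖) := by
      gcongr
      refine (ContinuousLinearMap.le_opNorm _ _).trans ?_
      gcongr
      refine h.trans ?_
      nlinarith
    _ = C * n := by
      rw [ha, hb]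
      have : √(n:ℝ) * √(n:ℝ) = n := Real.mul_self_sqrt (Nat.cast_nonneg _)
      linear_combination C * this

open Filter Topology in
theorem aux_seq (f : ℂ → ℂ) (hf : Continuous f) (z0 a b : ℂ) (ε : ℝ)
    (ha : ∃ᶠ w in 𝓝[≠] z0, ‖(f w - f z0) / (w - z0) - a‖ < ε)
    (hb : ∃ᶠ w in 𝓝[≠] z0, ‖(f w - f z0) / (w - z0) - b‖ < ε) :
    ∃ x y : ℕ → ℂ, ∀ i j, x i ≠ y j ∧
      (j ≤ i → ‖(f (x i) - f (y j)) / (x i - y j) - b‖ < ε) ∧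
      (i < j → ‖(f (x i) - f (y j)) / (x i - y j) - a‖ < ε) := by
  have symm : ∀ x y : ℂ, (f x - f y) / (x - y) = (f y - f x) / (y - x) := by
    intro x y
    rw [← neg_sub (f y), ← neg_sub y, neg_div_neg_eq]
  have key : ∀ (x c : ℂ), x ≠ z0 → ‖(f x - f z0) / (x - z0) - c‖ < ε →
      ∀ᶠ w in 𝓝[≠] z0, x ≠ w ∧ ‖(f x - f w) / (x - w) - c‖ < ε := by
    intro x c hx h
    apply Filter.Eventually.filter_mono nhdsWithin_le_nhds
    have h1 : ∀ᶠ w in 𝓝 z0, x ≠ w := by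
      filter_upwards [isOpen_ne.mem_nhds hx.symm] with w hw using hw.symm
    have h2 : ContinuousAt (fun w => ‖(f x - f w) / (x - w) - c‖) z0 := by
      have : x - z0 ≠ 0 := sub_ne_zero.2 hx
      fun_prop (disch := assumption)
    exact h1.and (h2.eventually_lt continuousAt_const h)
  obtain ⟨F, hF, hF2⟩ := exists_seq_of_forall_finset_exists
    (fun p : ℂ × ℂ => (p.1 ≠ z0 ∧ p.2 ≠ z0 ∧ ‖(f p.1 - f z0) / (p.1 - z0) - a‖ < ε ∧
      ‖(f p.2 - f z0) / (p.2 - z0) - b‖ < ε) ∧ p.2 ≠ p.1 ∧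
      ‖(f p.2 - f p.1) / (p.2 - p.1) - b‖ < ε)
    (fun p r => (p.1 ≠ r.2 ∧ ‖(f p.1 - f r.2) / (p.1 - r.2) - a‖ < ε) ∧
      (p.2 ≠ r.1 ∧ ‖(f p.2 - f r.1) / (p.2 - r.1) - b‖ < ε)) (by
    intro s hs
    have e1 : ∀ᶠ w in 𝓝[≠] z0, ∀ p ∈ s, p.1 ≠ w ∧ ‖(f p.1 - f w) / (p.1 - w) - a‖ < ε := by
      rw [Filter.eventually_all_finset]
      intro p hp
      exact key _ _ (hs p hp).1.1 (hs p hp).1.2.2.1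
    have e2 : ∀ᶠ w in 𝓝[≠] z0, ∀ p ∈ s, p.2 ≠ w ∧ ‖(f p.2 - f w) / (p.2 - w) - b‖ < ε := by
      rw [Filter.eventually_all_finset]
      intro p hp
      exact key _ _ (hs p hp).1.2.1 (hs p hp).1.2.2.2
    have e0 : ∀ᶠ w in 𝓝[≠] z0, w ≠ z0 := eventually_mem_nhdsWithin
    obtain ⟨y, hy, hy1, hy0⟩ := (hb.and_eventually (e1.and e0)).exists
    obtain ⟨x, hx, hx1, hx0, hx2⟩ :=
      (ha.and_eventually (e2.and (e0.and (key y b hy0 hy)))).exists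
    exact ⟨(x, y), ⟨⟨hx0, hy0, hx, hy⟩, hx2⟩, fun p hp => ⟨hy1 p hp, hx1 p hp⟩⟩)
  refine ⟨fun n => (F n).1, fun n => (F n).2, fun i j => ?_⟩
  rcases lt_trichotomy i j with h | h | h
  · have := hF2 i j h
    exact ⟨this.1.1, fun h' => absurd h (not_lt.2 h'), fun _ => this.1.2⟩
  · subst h
    have := hF i
    exact ⟨this.2.1.symm, fun _ => by rw [symm]; exact this.2.2, fun h' => absurd h' (lt_irrefl _)⟩
  · have := hF2 j i h
    exact ⟨this.2.1.symm, fun _ => by rw [symm]; exact this.2.2, fun h' => absurd h (not_lt.2 h'.le)⟩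

theorem aux_lower (m : ℕ) :
    (m : ℝ) * ∑ k ∈ Finset.range m, 1 / ((k : ℝ) + 1) ≤
      ∑ i : Fin (m + m), ∑ j : Fin (m + m), |((i:ℕ) - (j:ℕ) + 1/2 : ℝ)|⁻¹ := by
  have e : ∑ i : Fin (m + m), ∑ j : Fin (m + m), |((i:ℕ) - (j:ℕ) + 1/2 : ℝ)|⁻¹
      = ∑ i ∈ Finset.range (m + m), ∑ j ∈ Finset.range (m + m), |((i:ℝ) - (j:ℝ) + 1/2 : ℝ)|⁻¹ := by
    rw [← Fin.sum_univ_eq_sum_range (fun i : ℕ => ∑ j ∈ Finset.range (m + m),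
      |((i:ℝ) - (j:ℝ) + 1/2 : ℝ)|⁻¹)]
    refine Finset.sum_congr rfl fun i _ => ?_
    rw [← Fin.sum_univ_eq_sum_range (fun j : ℕ => |(((i:ℕ):ℝ) - (j:ℝ) + 1/2 : ℝ)|⁻¹)]
  rw [e, Finset.sum_range_add]
  have h0 : 0 ≤ ∑ i ∈ Finset.range m, ∑ j ∈ Finset.range (m + m), |((i:ℝ) - (j:ℝ) + 1/2 : ℝ)|⁻¹ := by
    positivity
  refine le_trans ?_ (le_add_of_nonneg_left h0)
  have : ∀ i ∈ Finset.range m, ∑ k ∈ Finset.range m, 1 / ((k : ℝ) + 1) ≤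
      ∑ j ∈ Finset.range (m + m), |(((m + i : ℕ):ℝ) - (j:ℝ) + 1/2 : ℝ)|⁻¹ := by
    intro i hi
    rw [Finset.mem_range] at hi
    calc _ ≤ ∑ k ∈ Finset.range m, |(((m + i : ℕ):ℝ) - ((m + i - k : ℕ):ℝ) + 1/2 : ℝ)|⁻¹ := by
          refine Finset.sum_le_sum fun k hk => ?_
          rw [Finset.mem_range] at hk
          rw [Nat.cast_sub (by omega), sub_sub_cancel, abs_of_pos (by positivity), one_div]
          apply inv_anti₀ (by positivity)
          linarith
      _ = ∑ j ∈ (Finset.range m).image (fun k => m + i - k),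
            |(((m + i : ℕ):ℝ) - (j:ℝ) + 1/2 : ℝ)|⁻¹ := by
          rw [Finset.sum_image]
          intro a ha b hb hab
          simp only [Finset.coe_range, Set.mem_Iio] at ha hb
          simp only at hab
          omega
      _ ≤ _ := by
          apply Finset.sum_le_sum_of_subset_of_nonneg
          · intro j hj
            simp only [Finset.mem_image, Finset.mem_range] at hj ⊢
            omega
          · intros; positivity
  have h2 := Finset.sum_le_sum this
  simpa using h2

open Filter Topology in
theorem aux_unique (f : ℂ → ℂ) (hf : Continuous f) (C : ℝ) (hC : 0 ≤ C)
    (hyp : ∀ (H : Type) [NormedAddCommGroup H] [InnerProductSpace ℂ H] [CompleteSpace H]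
      (N R : H →L[ℂ] H), IsStarNormal N →
      ‖cfc f N * R - R * cfc f N‖ ≤ C * ‖N * R - R * N‖) (z0 a b : ℂ)
    (ha : MapClusterPt a (𝓝[≠] z0) (fun w => (f w - f z0) / (w - z0)))
    (hb : MapClusterPt b (𝓝[≠] z0) (fun w => (f w - f z0) / (w - z0))) : a = b := by
  by_contra hab
  have hd : 0 < ‖b - a‖ := norm_pos_iff.2 (sub_ne_zero.2 (Ne.symm hab))
  set ε := ‖b - a‖ / 4 with hε
  have hεp : 0 < ε := by positivity
  have fr : ∀ c, MapClusterPt c (𝓝[≠] z0) (fun w => (f w - f z0) / (w - z0)) →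
      ∃ᶠ w in 𝓝[≠] z0, ‖(f w - f z0) / (w - z0) - c‖ < ε := by
    intro c hc
    have := mapClusterPt_iff_frequently.1 hc _ (Metric.ball_mem_nhds c hεp)
    simpa only [mem_ball_iff_norm] using this
  obtain ⟨x, y, hxy⟩ := aux_seq f hf z0 a b ε (fr a ha) (fr b hb)
  have main : ∀ m : ℕ, 0 < m → ∑ k ∈ Finset.range m, 1 / ((k : ℝ) + 1) ≤
      2 * Real.pi * (C + ‖(a + b) / 2‖) / ε := by
    intro m hm
    let A : Matrix (Fin (m + m)) (Fin (m + m)) ℂ := fun i j =>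
      Complex.I / (Real.pi * ((i:ℕ) - (j:ℕ) + 1/2 : ℝ) : ℝ)
    have h1 := aux_schur f hf C hC hyp (n := m + m) (fun i => x i) (fun j => y j)
      (fun i j => (hxy i j).1) A aux_hilbert
    have h2 : ‖∑ i, ∑ j, A i j‖ ≤ ((m + m : ℕ) : ℝ) := by
      have := aux_hilbert (n := m + m) (fun _ => 1) (fun _ => 1)
      simp only [one_mul, mul_one, norm_one, one_pow, Finset.sum_const, Finset.card_univ,
        Fintype.card_fin, nsmul_eq_mul] at this
      change 2 * ‖∑ i, ∑ j, A i j‖ ≤ _ at this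
      linarith
    set D : Fin (m + m) → Fin (m + m) → ℂ := fun i j =>
      (f (x i) - f (y j)) / (x i - y j) with hD
    have hnA : ∀ i j, ‖A i j‖ = Real.pi⁻¹ * |((i:ℕ) - (j:ℕ) + 1/2 : ℝ)|⁻¹ := by
      intro i j
      simp only [A]
      rw [norm_div, Complex.norm_I, Complex.norm_real, Real.norm_eq_abs, abs_mul,
        abs_of_pos Real.pi_pos, one_div, mul_inv]
    have hpt : ∀ i j, ∃ e : ℂ, ‖e‖ ≤ ε * ‖A i j‖ ∧
        A i j * D i j - (a + b) / 2 * A i j - e = Complex.I * ((b - a) / 2) * (‖A i j‖ : ℝ) := by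
      intro i j
      rcases le_or_gt (j:ℕ) (i:ℕ) with h | h
      · refine ⟨A i j * (D i j - b), ?_, ?_⟩
        · rw [norm_mul, mul_comm]
          gcongr
          exact ((hxy i j).2.1 h).le
        · have : A i j = Complex.I * (‖A i j‖ : ℝ) := by
            rw [hnA]
            have h' : ((j:ℕ):ℝ) ≤ ((i:ℕ):ℝ) := by exact_mod_cast h
            rw [abs_of_pos (by linarith), ← mul_inv, Complex.ofReal_inv, ← div_eq_mul_inv]
          linear_combination ((b - a) / 2) * this
      · refine ⟨A i j * (D i j - a), ?_, ?_⟩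
        · rw [norm_mul, mul_comm]
          gcongr
          exact ((hxy i j).2.2 h).le
        · have : A i j = - (Complex.I * (‖A i j‖ : ℝ)) := by
            rw [hnA]
            have h' : ((i:ℕ):ℝ) + 1 ≤ ((j:ℕ):ℝ) := by exact_mod_cast h
            rw [abs_of_neg (by linarith), ← mul_inv, Complex.ofReal_inv, ← div_eq_mul_inv,
              mul_neg, Complex.ofReal_neg, div_neg, neg_neg]
          linear_combination (-(b - a) / 2) * this
    choose e he1 he2 using hpt
    set S : ℝ := ∑ i, ∑ j, ‖A i j‖ with hS
    have hid : ∑ i, ∑ j, A i j * D i j - (a + b) / 2 * ∑ i, ∑ j, A i j - ∑ i, ∑ j, e i j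
        = Complex.I * ((b - a) / 2) * (S : ℝ) := by
      rw [hS]
      push_cast
      simp only [Finset.mul_sum, ← Finset.sum_sub_distrib, he2]
    have hn := congrArg norm hid
    rw [norm_mul, norm_mul, Complex.norm_I, Complex.norm_real, norm_div] at hn
    have hS0 : 0 ≤ S := by positivity
    rw [Real.norm_eq_abs, abs_of_nonneg hS0] at hn
    have he : ‖∑ i, ∑ j, e i j‖ ≤ ε * S := by
      rw [hS]
      simp only [Finset.mul_sum]
      refine (norm_sum_le _ _).trans (Finset.sum_le_sum fun i _ => ?_)
      exact (norm_sum_le _ _).trans (Finset.sum_le_sum fun j _ => he1 i j)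
    have h3 : ‖∑ i, ∑ j, A i j * D i j - (a + b) / 2 * ∑ i, ∑ j, A i j - ∑ i, ∑ j, e i j‖ ≤
        C * ((m + m : ℕ) : ℝ) + ‖(a + b) / 2‖ * ((m + m : ℕ) : ℝ) + ε * S := by
      refine (norm_sub_le _ _).trans (add_le_add ((norm_sub_le _ _).trans (add_le_add h1 ?_)) he)
      rw [norm_mul]
      gcongr
    have h4 : ε * S ≤ (C + ‖(a + b) / 2‖) * (2 * m) := by
      rw [hn] at h3
      have : ‖(2:ℂ)‖ = 2 := by simp
      rw [this] at h3
      push_cast at h3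
      have h5 : ‖b - a‖ = 4 * ε := by rw [hε]; ring
      rw [h5] at h3
      nlinarith
    have h6 : Real.pi⁻¹ * (m * ∑ k ∈ Finset.range m, 1 / ((k : ℝ) + 1)) ≤ S := by
      rw [hS]
      simp only [hnA, ← Finset.mul_sum]
      exact mul_le_mul_of_nonneg_left (aux_lower m) (by positivity)
    have hm' : (0:ℝ) < m := by exact_mod_cast hm
    set T := ∑ k ∈ Finset.range m, 1 / ((k : ℝ) + 1)
    rw [le_div_iff₀ hεp]
    have h7 : ε * (Real.pi⁻¹ * (m * T)) ≤ (C + ‖(a + b) / 2‖) * (2 * m) :=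
      (mul_le_mul_of_nonneg_left h6 hεp.le).trans h4
    have hpi := Real.pi_pos
    have h8 : ε * (Real.pi⁻¹ * (m * T)) * Real.pi = (T * ε) * m := by
      field_simp
    have h9 := mul_le_mul_of_nonneg_right h7 hpi.le
    rw [h8] at h9
    refine le_of_mul_le_mul_right (h9.trans (le_of_eq ?_)) hm'
    ring
  have ht := Real.tendsto_sum_range_one_div_nat_succ_atTop
  obtain ⟨m, hm, hm0⟩ := ((ht.eventually_gt_atTop (2 * Real.pi * (C + ‖(a + b) / 2‖) / ε)).and
    (eventually_gt_atTop 0)).exists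
  exact absurd (main m hm0) (not_le.2 hm)

/-- The only commutator Lipschitz functions on the whole plane are affine: if
`f : ℂ → ℂ` is continuous and there is `C ≥ 0` such that
`‖f(N)R - Rf(N)‖ ≤ C * ‖NR - RN‖` for every bounded normal operator `N` and
every bounded operator `R` on any complex Hilbert space, then `f(z) = a z + b`
for some `a, b ∈ ℂ`. -/
theorem stmt_17 (f : ℂ → ℂ) (hf : Continuous f) (C : ℝ) (hC : 0 ≤ C)
    (hyp : ∀ (H : Type) [NormedAddCommGroup H] [InnerProductSpace ℂ H] [CompleteSpace H]
      (N R : H →L[ℂ] H), IsStarNormal N →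
      ‖cfc f N * R - R * cfc f N‖ ≤ C * ‖N * R - R * N‖) :
    ∃ a b : ℂ, ∀ z : ℂ, f z = a * z + b := by
  have hlip : ∀ x y : ℂ, x ≠ y → ‖(f x - f y) / (x - y)‖ ≤ C := by
    intro x y h
    have := aux_schur f hf C hC hyp (n := 1) (fun _ => x) (fun _ => y) (fun _ _ => h) 1 (by
      intro u v
      simp
      nlinarith [sq_nonneg (‖u 0‖ - ‖v 0‖)])
    simpa using this
  have hder : ∀ z0, ∃ a, HasDerivAt f a z0 ∧ ‖a‖ ≤ C := by
    intro z0
    have hmem : ∀ᶠ w in nhdsWithin z0 {z0}ᶜ, (f w - f z0) / (w - z0) ∈ Metric.closedBall (0:ℂ) C := by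
      filter_upwards [self_mem_nhdsWithin] with w hw
      simpa using hlip w z0 hw
    have hK := isCompact_closedBall (0:ℂ) C
    obtain ⟨a, haK, ha⟩ := hK.exists_mapClusterPt_of_frequently hmem.frequently
    refine ⟨a, ?_, by simpa using haK⟩
    have ht : Filter.Tendsto (fun w => (f w - f z0) / (w - z0)) (nhdsWithin z0 {z0}ᶜ) (nhds a) :=
      hK.le_nhds_of_unique_clusterPt hmem
        (fun c _ hc => aux_unique f hf C hC hyp z0 c a hc ha)
    rw [hasDerivAt_iff_tendsto_slope]
    refine ht.congr fun w => ?_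
    rw [slope_def_field]
  choose a ha using hder
  have hdiff : Differentiable ℂ f := fun z => (ha z).1.differentiableAt
  have hd2 : Differentiable ℂ (deriv f) := by
    rw [← differentiableOn_univ] at hdiff ⊢
    exact hdiff.deriv isOpen_univ
  have hbdd : Bornology.IsBounded (Set.range (deriv f)) := by
    refine (Metric.isBounded_closedBall (x := (0:ℂ)) (r := C)).subset ?_
    rintro _ ⟨z, rfl⟩
    rw [(ha z).1.deriv]
    simpa using (ha z).2
  refine ⟨deriv f 0, f 0, fun z => ?_⟩
  have hg : ∀ w, HasDerivAt (fun w => f w - deriv f 0 * w) 0 w := by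
    intro w
    have h1 := (hdiff w).hasDerivAt.sub ((hasDerivAt_id w).const_mul (deriv f 0))
    rw [hd2.apply_eq_apply_of_bounded hbdd w 0] at h1
    rw [mul_one, sub_self] at h1
    exact h1
  have := is_const_of_deriv_eq_zero (fun w => (hg w).differentiableAt) (fun w => (hg w).deriv) z 0
  simp only [mul_zero, sub_zero] at this
  linear_combination this
end

section
/- If every Lipschitz function on a closed set F ⊆ ℂ were operator Lipschitz on F, then F is finite. Equivalently: if F is a closed infinite subset of ℂ, then there exist a function f : ℂ → ℂ and L ≥ 0 such that f is Lipschitz on F with constant L, yet f is not operator Lipschitz on F: for every C ≥ 0 there exist bounded normal operators N₁ and N₂ on the Hilbert space ℓ²(ℕ, ℂ) with spectra contained in F such that ‖f(N₁) − f(N₂)‖ > C·‖N₁ − N₂‖. -/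
lemma cayley_aux {A : Type*} [CStarAlgebra A] [Nontrivial A] (R : A) (hR : IsSelfAdjoint R)
    (hn : ‖R‖ ≤ 1 / 2) :
    ∃ U ∈ unitary A, ∀ N : A, ‖U * N * star U - N‖ ≤ 8 * ‖N * R - R * N‖ ∧
      ‖N * R - R * N‖ ≤ 2 * ‖U * N * star U - N‖ := by
  have hunit : IsUnit (1 - Complex.I • R) := by
    have h : (-Complex.I) ∉ spectrum ℂ R := by
      intro h
      have := congrArg Complex.im (hR.mem_spectrum_eq_re h)
      simp at this
    rw [spectrum.notMem_iff] at h
    have h2 : (1 - Complex.I • R) = algebraMap ℂ A Complex.I * (algebraMap ℂ A (-Complex.I) - R) := by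
      rw [mul_sub, ← map_mul, ← Algebra.smul_def]
      simp
    rw [h2]
    exact ((IsUnit.mk0 _ Complex.I_ne_zero).map _).mul h
  obtain ⟨T, hT⟩ := hunit
  set S : A := ((T⁻¹ : Aˣ) : A) with hS
  have hTS : (T : A) * S = 1 := by simp [hS]
  have hST : S * (T : A) = 1 := by simp [hS]
  have hTs : star (T : A) = 1 + Complex.I • R := by
    rw [hT]; simp [hR.star_eq]
  have hTT : (T : A) + star (T : A) = 2 := by
    rw [hTs, hT]; rw [← one_add_one_eq_two]; abel
  have hTSs : star S * star (T : A) = 1 := by rw [← star_mul, hTS, star_one]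
  have hSTs : star (T : A) * star S = 1 := by rw [← star_mul, hST, star_one]
  have e1 : S + star S = 2 * (star S * S) := by
    calc S + star S = (star S * star (T : A)) * S + star S * ((T : A) * S) := by
            rw [hTSs, hTS]; simp
      _ = star S * ((T : A) + star (T : A)) * S := by noncomm_ring
      _ = _ := by rw [hTT]; noncomm_ring
  have e2 : S + star S = 2 * (S * star S) := by
    calc S + star S = S * (star (T : A) * star S) + (S * (T : A)) * star S := by
            rw [hSTs, hST]; simp
      _ = S * ((T : A) + star (T : A)) * star S := by noncomm_ring
      _ = _ := by rw [hTT]; noncomm_ring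
  have hSn : ‖S‖ ≤ 2 := by
    have : S = 1 + Complex.I • R * S := by
      have := hTS
      rw [hT, sub_mul, one_mul] at this
      rw [← this]; abel
    have h1 : ‖S‖ ≤ 1 + ‖R‖ * ‖S‖ := by
      calc ‖S‖ = ‖1 + Complex.I • R * S‖ := by rw [← this]
        _ ≤ ‖(1 : A)‖ + ‖Complex.I • R * S‖ := norm_add_le _ _
        _ ≤ 1 + ‖R‖ * ‖S‖ := by
          rw [CStarRing.norm_one]
          gcongr
          refine (norm_mul_le _ _).trans ?_
          rw [norm_smul]; simp
    nlinarith [norm_nonneg S]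
  have hTn : ‖(T : A)‖ ≤ 3 / 2 := by
    rw [hT]
    refine (norm_sub_le _ _).trans ?_
    rw [CStarRing.norm_one, norm_smul]; simp; linarith
  have hU : 2 * S - 1 ∈ unitary A := by
    rw [Unitary.mem_iff]
    have hs : star (2 * S - 1) = 2 * star S - 1 := by
      simp [two_mul]
    rw [hs]
    constructor
    · calc (2 * star S - 1) * (2 * S - 1) = 2 * (2 * (star S * S)) - 2 * (S + star S) + 1 := by
            noncomm_ring
        _ = 1 := by rw [e1]; abel
    · calc (2 * S - 1) * (2 * star S - 1) = 2 * (2 * (S * star S)) - 2 * (S + star S) + 1 := by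
            noncomm_ring
        _ = 1 := by rw [e2]; abel
  refine ⟨2 * S - 1, hU, fun N => ?_⟩
  set U := 2 * S - 1 with hUdef
  have hUU : star U * U = 1 := (Unitary.mem_iff.1 hU).1
  have hUU' : U * star U = 1 := (Unitary.mem_iff.1 hU).2
  have nU : ‖U‖ ≤ 1 := by rw [CStarRing.norm_of_mem_unitary hU]
  have nU' : ‖star U‖ ≤ 1 := by rw [norm_star]; exact nU
  have key : N * (T : A) - T * N = -(Complex.I • (N * R - R * N)) := by
    rw [hT, mul_sub, sub_mul, mul_smul_comm, smul_mul_assoc, smul_sub]; simp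
  have c1 : U * N - N * U = 2 * (S * (N * (T : A) - T * N) * S) := by
    calc U * N - N * U = 2 * (S * N * 1 - 1 * N * S) := by rw [hUdef]; noncomm_ring
      _ = 2 * (S * N * ((T : A) * S) - (S * (T : A)) * N * S) := by rw [hTS, hST]
      _ = _ := by noncomm_ring
  have c2 : (2 : A) * (N * (T : A) - T * N) = T * (U * N - N * U) * T := by
    rw [c1]
    calc (2 : A) * (N * (T : A) - T * N) = 2 * (1 * (N * (T : A) - T * N) * 1) := by simp
      _ = 2 * ((T * S) * (N * (T : A) - T * N) * (S * T)) := by rw [hTS, hST]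
      _ = _ := by noncomm_ring
  have nk : ‖N * (T : A) - T * N‖ = ‖N * R - R * N‖ := by
    rw [key, norm_neg, norm_smul]; simp
  constructor
  · have : U * N * star U - N = (U * N - N * U) * star U := by
      rw [sub_mul (U * N), mul_assoc N, hUU', mul_one]
    rw [this]
    calc _ ≤ ‖U * N - N * U‖ * ‖star U‖ := norm_mul_le _ _
      _ ≤ ‖U * N - N * U‖ * 1 := by gcongr
      _ ≤ 2 * (2 * ‖N * R - R * N‖ * 2) := by
        rw [mul_one, c1, two_mul]
        have : ‖S * (N * (T : A) - T * N) * S‖ ≤ 2 * ‖N * R - R * N‖ * 2 := by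
          rw [← nk]
          exact norm_mul₃_le.trans (by gcongr)
        linarith [norm_add_le (S * (N * (T : A) - T * N) * S) (S * (N * (T : A) - T * N) * S)]
      _ = _ := by ring
  · have h1 : ‖U * N - N * U‖ ≤ ‖U * N * star U - N‖ := by
      have : U * N - N * U = (U * N * star U - N) * U := by
        rw [sub_mul (U * N * star U), mul_assoc (U * N), hUU, mul_one]
      rw [this]
      calc _ ≤ ‖U * N * star U - N‖ * ‖U‖ := norm_mul_le _ _
        _ ≤ ‖U * N * star U - N‖ * 1 := by gcongr
        _ = _ := mul_one _
    have h2 : 2 * ‖N * R - R * N‖ ≤ 3 / 2 * ‖U * N - N * U‖ * (3 / 2) := by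
      rw [← nk]
      have : ‖(2 : A) * (N * (T : A) - T * N)‖ = 2 * ‖N * (T : A) - T * N‖ := by
        rw [two_mul, ← two_smul ℂ, norm_smul]; simp
      rw [← this, c2]
      exact norm_mul₃_le.trans (by gcongr)
    nlinarith [norm_nonneg (U * N - N * U)]

/-- commutator estimate from the operator Lipschitz estimate -/
lemma commutator_est {A : Type*} [CStarAlgebra A] [Nontrivial A] (F : Set ℂ) (f : ℂ → ℂ)
    (hf : Continuous f) (C : ℝ) (hC : 0 ≤ C)
    (h : ∀ N₁ N₂ : A, IsStarNormal N₁ → IsStarNormal N₂ → spectrum ℂ N₁ ⊆ F →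
      spectrum ℂ N₂ ⊆ F → ‖cfc f N₁ - cfc f N₂‖ ≤ C * ‖N₁ - N₂‖)
    (N : A) (hN : IsStarNormal N) (hs : spectrum ℂ N ⊆ F) (R : A) (hR : IsSelfAdjoint R) :
    ‖cfc f N * R - R * cfc f N‖ ≤ 16 * C * ‖N * R - R * N‖ := by
  have small : ∀ R : A, IsSelfAdjoint R → ‖R‖ ≤ 1 / 2 →
      ‖cfc f N * R - R * cfc f N‖ ≤ 16 * C * ‖N * R - R * N‖ := by
    intro R hR hn
    obtain ⟨U, hU, hU2⟩ := cayley_aux R hR hn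
    let φ := Unitary.conjStarAlgAut ℂ A ⟨U, hU⟩
    have hφ : ∀ x, φ x = U * x * star U := fun x => rfl
    have hφc : Continuous φ := by
      have : (φ : A → A) = fun x => U * x * star U := funext hφ
      rw [this]; fun_prop
    have hnorm : IsStarNormal (φ N) := hN.map φ
    have hcfc : φ (cfc f N) = cfc f (φ N) :=
      StarAlgHomClass.map_cfc φ f N (hf.continuousOn) hφc hN hnorm
    have hsp : spectrum ℂ (φ N) ⊆ F := by
      rw [AlgEquiv.spectrum_eq φ N]; exact hs
    have := h (φ N) N hnorm hN hsp hs
    rw [← hcfc, hφ, hφ] at this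
    calc _ ≤ 2 * ‖U * cfc f N * star U - cfc f N‖ := (hU2 _).2
      _ ≤ 2 * (C * (8 * ‖N * R - R * N‖)) := by
        gcongr
        exact this.trans (by gcongr; exact (hU2 N).1)
      _ = _ := by ring
  set t : ℝ := 1 / (2 * (‖R‖ + 1)) with ht
  have htpos : 0 < t := by positivity
  have h1 := small ((t : ℂ) • R) (by
    rw [IsSelfAdjoint, star_smul, hR.star_eq]; simp) (by
    rw [norm_smul, Complex.norm_real, Real.norm_of_nonneg htpos.le, ht]
    rw [div_mul_eq_mul_div, div_le_div_iff₀ (by positivity) (by positivity)]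
    linarith [norm_nonneg R])
  have e : ∀ M : A, ‖M * ((t : ℂ) • R) - ((t : ℂ) • R) * M‖ = t * ‖M * R - R * M‖ := by
    intro M
    rw [mul_smul_comm, smul_mul_assoc, ← smul_sub, norm_smul, Complex.norm_real,
      Real.norm_of_nonneg htpos.le]
  rw [e, e] at h1
  refine le_of_mul_le_mul_left ?_ htpos
  linarith


/-- the tensor product of rotations -/
lemma exists_matrix (ε : ℝ) (h0 : 0 ≤ ε) (h1 : ε ≤ 1) (k : ℕ) :
    ∃ (n : ℕ) (A : Fin n → Fin n → ℝ), 0 < n ∧ (∀ a b, |A a b| ≤ 1) ∧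
      (∀ x : Fin n → ℂ, ∑ a, ‖∑ b, (A a b : ℂ) * x b‖ ^ 2 ≤ (1 + ε ^ 2) ^ k * ∑ b, ‖x b‖ ^ 2) ∧
      (∑ a, ∑ b, A a b = n) ∧
      (∑ a, ∑ b, (if a ≤ b then A a b else 0) = n * (1 + k * ε / 2)) := by
  induction k with
  | zero => exact ⟨1, fun _ _ => 1, by simp⟩
  | succ k ih =>
    obtain ⟨n, A, hn, hA1, hA2, hA3, hA4⟩ := ih
    refine ⟨n + n, fun a b => Fin.addCases (fun a' => Fin.addCases (fun b' => A a' b')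
      (fun b' => ε * A a' b') b) (fun a' => Fin.addCases (fun b' => -ε * A a' b')
      (fun b' => A a' b') b) a, by omega, ?_, ?_, ?_, ?_⟩
    · have h2 : ∀ a b, |ε * A a b| ≤ 1 := fun a b => by
        rw [abs_mul, abs_of_nonneg h0]
        exact mul_le_one₀ h1 (abs_nonneg _) (hA1 a b)
      intro a b
      refine Fin.addCases (fun a' => ?_) (fun a' => ?_) a <;>
      refine Fin.addCases (fun b' => ?_) (fun b' => ?_) b <;>
        simp only [Fin.addCases_left, Fin.addCases_right, neg_mul, abs_neg] <;>
        first | exact hA1 _ _ | exact h2 _ _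
    · intro x
      simp only [Fin.sum_univ_add, Fin.addCases_left, Fin.addCases_right]
      set y : Fin n → ℂ := fun i => x (Fin.castAdd n i)
      set z : Fin n → ℂ := fun i => x (Fin.natAdd n i)
      have hy := hA2 y
      have hz := hA2 z
      have hid : ∀ s t : ℂ, ‖s + ε * t‖ ^ 2 + ‖-ε * s + t‖ ^ 2 =
          (1 + ε ^ 2) * (‖s‖ ^ 2 + ‖t‖ ^ 2) := by
        intro s t
        simp only [← Complex.normSq_eq_norm_sq, Complex.normSq_apply]
        simp
        ring
      rw [← Finset.sum_add_distrib]
      have : ∀ a : Fin n, ‖∑ b, (A a b : ℂ) * x (Fin.castAdd n b) +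
            ∑ b, ((ε * A a b : ℝ) : ℂ) * x (Fin.natAdd n b)‖ ^ 2 +
          ‖∑ b, ((-ε * A a b : ℝ) : ℂ) * x (Fin.castAdd n b) +
            ∑ b, (A a b : ℂ) * x (Fin.natAdd n b)‖ ^ 2 =
          (1 + ε ^ 2) * (‖∑ b, (A a b : ℂ) * y b‖ ^ 2 + ‖∑ b, (A a b : ℂ) * z b‖ ^ 2) := by
        intro a
        rw [← hid, Finset.mul_sum, Finset.mul_sum]
        simp only [y, z, Complex.ofReal_mul, Complex.ofReal_neg, mul_assoc]
      simp only [this]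
      rw [← Finset.mul_sum, Finset.sum_add_distrib, pow_succ' (1 + ε ^ 2), mul_assoc]
      gcongr
      rw [mul_add]
      exact add_le_add hy hz
    · simp only [Fin.sum_univ_add, Fin.addCases_left, Fin.addCases_right,
        Finset.sum_add_distrib, ← Finset.mul_sum, hA3]
      push_cast; ring
    · have l1 : ∀ a b : Fin n, Fin.castAdd n a ≤ Fin.natAdd n b := fun a b => by
        simp only [Fin.le_def, Fin.val_castAdd, Fin.val_natAdd]; omega
      have l2 : ∀ a b : Fin n, ¬ (Fin.natAdd n a ≤ Fin.castAdd n b) := fun a b => by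
        simp only [Fin.le_def, Fin.val_castAdd, Fin.val_natAdd]; omega
      have l3 : ∀ a b : Fin n, Fin.castAdd n a ≤ Fin.castAdd n b ↔ a ≤ b := fun a b => by
        simp only [Fin.le_def, Fin.val_castAdd, Fin.val_natAdd]
      have l4 : ∀ a b : Fin n, Fin.natAdd n a ≤ Fin.natAdd n b ↔ a ≤ b := fun a b => by
        simp only [Fin.le_def, Fin.val_castAdd, Fin.val_natAdd]; omega
      simp only [Fin.sum_univ_add, Fin.addCases_left, Fin.addCases_right, l1, l2, l3, l4, if_true,
        if_false, Finset.sum_add_distrib, ← Finset.mul_sum, hA3, hA4]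
      simp
      ring

lemma exists_matrix' (T : ℝ) :
    ∃ (n : ℕ) (A : Fin n → Fin n → ℝ), 0 < n ∧ (∀ a b, |A a b| ≤ 1) ∧
      (∀ x : Fin n → ℂ, ∑ a, ‖∑ b, (A a b : ℂ) * x b‖ ^ 2 ≤ 4 * ∑ b, ‖x b‖ ^ 2) ∧
      (n * T ≤ ∑ a, ∑ b, (if a ≤ b then A a b else 0)) := by
  obtain ⟨m, hm⟩ := exists_nat_ge (2 * T)
  have hp : (0 : ℝ) < (m : ℝ) + 1 := by positivity
  obtain ⟨n, A, hn, hA1, hA2, -, hA4⟩ := exists_matrix (1 / ((m : ℝ) + 1)) (by positivity)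
    (by rw [div_le_one hp]; linarith [(Nat.cast_nonneg m : (0 : ℝ) ≤ m)]) ((m + 1) ^ 2)
  refine ⟨n, A, hn, hA1, fun x => (hA2 x).trans ?_, ?_⟩
  · gcongr
    have := Real.one_sub_le_exp_neg (-(1 / ((m : ℝ) + 1)) ^ 2)
    calc (1 + (1 / ((m : ℝ) + 1)) ^ 2) ^ ((m + 1) ^ 2)
        ≤ (Real.exp ((1 / ((m : ℝ) + 1)) ^ 2)) ^ ((m + 1) ^ 2) := by
          gcongr; linarith [Real.add_one_le_exp ((1 / ((m : ℝ) + 1)) ^ 2)]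
      _ = Real.exp 1 := by
          rw [← Real.exp_nat_mul]; congr 1; push_cast; field_simp
      _ ≤ 4 := by linarith [Real.exp_one_lt_d9]
  · rw [hA4]
    gcongr
    push_cast
    field_simp
    nlinarith

open InnerProductSpace in
/-- diagonal operators -/
noncomputable def diagHom {H : Type*} [NormedAddCommGroup H] [InnerProductSpace ℂ H]
    [CompleteSpace H] {ι : Type*} [Fintype ι] (e : ι → H) (he : Orthonormal ℂ e)
    (i0 : ι) : (ι → ℂ) →⋆ₐ[ℂ] (H →L[ℂ] H) where
  toFun d := d i0 • 1 + ∑ i, (d i - d i0) • rankOne ℂ (e i) (e i)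
  map_one' := by simp
  map_zero' := by simp
  map_add' d d' := by
    simp only [Pi.add_apply, add_smul, add_sub_add_comm, Finset.sum_add_distrib]
    abel
  commutes' r := by simp [Algebra.algebraMap_eq_smul_one]
  map_star' d := by
    simp [ContinuousLinearMap.star_eq_adjoint]
  map_mul' d d' := by
    classical
    have hP : ∀ i j, rankOne ℂ (e i) (e i) * rankOne ℂ (e j) (e j) =
        if i = j then rankOne ℂ (e i) (e i) else 0 := by
      intro i j
      rw [ContinuousLinearMap.mul_def, rankOne_comp_rankOne, orthonormal_iff_ite.1 he]
      split_ifs with h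
      · subst h; simp
      · simp
    simp only [add_mul, mul_add, Finset.sum_mul_sum, smul_mul_smul_comm, hP, smul_ite, smul_zero,
      Finset.sum_ite_eq', Finset.mem_univ, if_true, mul_one, one_mul, Pi.mul_apply,
      Finset.mul_sum, Finset.sum_mul, add_assoc, ← Finset.sum_add_distrib]
    congr 2
    ext1 i
    simp only [← add_smul]
    congr 1
    ring

lemma cfc_complex (f : ℂ → ℂ) (z : ℂ) : cfc f z = f z := by
  simpa using cfc_algebraMap (A := ℂ) z f

section
variable {H : Type*} [NormedAddCommGroup H] [InnerProductSpace ℂ H]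
    [CompleteSpace H] {ι : Type*} [Fintype ι] (e : ι → H) (he : Orthonormal ℂ e)
    (i0 : ι)

open InnerProductSpace

lemma diagHom_def (d : ι → ℂ) : diagHom e he i0 d =
  d i0 • 1 + ∑ i, (d i - d i0) • rankOne ℂ (e i) (e i) := rfl

lemma diagHom_apply (d : ι → ℂ) (i : ι) : diagHom e he i0 d (e i) = d i • e i := by
  classical
  rw [diagHom_def]
  simp [orthonormal_iff_ite.1 he, sub_smul]

lemma diagHom_mul_rankOne (d : ι → ℂ) (i : ι) (y : H) :
    diagHom e he i0 d * rankOne ℂ (e i) y = d i • rankOne ℂ (e i) y := by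
  rw [ContinuousLinearMap.mul_def, comp_rankOne, diagHom_apply]
  simp

lemma rankOne_mul_diagHom (d : ι → ℂ) (i : ι) (y : H) :
    rankOne ℂ y (e i) * diagHom e he i0 d = d i • rankOne ℂ y (e i) := by
  rw [ContinuousLinearMap.mul_def, rankOne_comp, ← ContinuousLinearMap.star_eq_adjoint,
    ← map_star, diagHom_apply]
  simp

lemma diagHom_normal (d : ι → ℂ) : IsStarNormal (diagHom e he i0 d) :=
  (inferInstance : IsStarNormal d).map (diagHom e he i0)

lemma diagHom_spectrum (d : ι → ℂ) (F : Set ℂ) (hd : ∀ i, d i ∈ F) :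
    spectrum ℂ (diagHom e he i0 d) ⊆ F := by
  refine (AlgHom.spectrum_apply_subset (diagHom e he i0) d).trans ?_
  rw [Pi.spectrum_eq]
  intro z hz
  simp only [Set.mem_iUnion] at hz
  obtain ⟨i, hi⟩ := hz
  rw [← Algebra.algebraMap_self_apply (d i)] at hi
  rw [spectrum.scalar_eq] at hi
  simp at hi
  rw [hi]; exact hd i

lemma diagHom_cfc (d : ι → ℂ) (f : ℂ → ℂ) (hf : Continuous f) :
    cfc f (diagHom e he i0 d) = diagHom e he i0 (fun i => f (d i)) := by
  have hc : Continuous (diagHom e he i0) :=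
    LinearMap.continuous_of_finiteDimensional
      ((diagHom e he i0).toAlgHom.toLinearMap)
  have h1 := StarAlgHom.map_cfc (diagHom e he i0) f d hf.continuousOn hc
    (inferInstance : IsStarNormal d) (diagHom_normal e he i0 d)
  rw [← h1]
  congr 1
  rw [cfc_map_pi (S := ℂ) f d hf.continuousOn (p := IsStarNormal) (q := fun _ => IsStarNormal)
    inferInstance (fun i => inferInstance)]
  ext i
  exact cfc_complex f (d i)
end

section
open InnerProductSpace
variable {H : Type*} [NormedAddCommGroup H] [InnerProductSpace ℂ H]
    [CompleteSpace H] {n : ℕ}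

lemma norm_sum_rankOne_le (u v : Fin n → H) (hu : Orthonormal ℂ u) (hv : Orthonormal ℂ v)
    (A : Fin n → Fin n → ℝ)
    (hA : ∀ x : Fin n → ℂ, ∑ a, ‖∑ b, (A a b : ℂ) * x b‖ ^ 2 ≤ 4 * ∑ b, ‖x b‖ ^ 2) :
    ‖∑ a, ∑ b, (A a b : ℂ) • rankOne ℂ (u a) (v b)‖ ≤ 2 := by
  refine ContinuousLinearMap.opNorm_le_bound _ (by norm_num) fun x => ?_
  have h1 : (∑ a, ∑ b, (A a b : ℂ) • rankOne ℂ (u a) (v b)) x =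
      ∑ a, (∑ b, (A a b : ℂ) * inner ℂ (v b) x) • u a := by
    simp [Finset.sum_smul, mul_smul]
  have h2 : ‖∑ a, (∑ b, (A a b : ℂ) * inner ℂ (v b) x) • u a‖ ^ 2 =
      ∑ a, ‖∑ b, (A a b : ℂ) * inner ℂ (v b) x‖ ^ 2 := by
    rw [@norm_sq_eq_re_inner ℂ, hu.inner_sum]
    rw [map_sum]
    refine Finset.sum_congr rfl fun a _ => ?_
    rw [RCLike.conj_mul]
    norm_cast
  rw [h1]
  refine le_of_sq_le_sq ?_ (by positivity)
  rw [h2]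
  calc _ ≤ 4 * ∑ b, ‖inner ℂ (v b) x‖ ^ 2 := hA _
    _ ≤ 4 * ‖x‖ ^ 2 := by gcongr; exact hv.sum_inner_products_le x
    _ = _ := by ring

lemma main_est (u v : Fin n → H) (he : Orthonormal ℂ (Sum.elim u v)) (hn : 0 < n)
    (F : Set ℂ) (f : ℂ → ℂ) (hf : Continuous f) (C : ℝ) (hC : 0 ≤ C)
    (h : ∀ N₁ N₂ : H →L[ℂ] H, IsStarNormal N₁ → IsStarNormal N₂ → spectrum ℂ N₁ ⊆ F →
      spectrum ℂ N₂ ⊆ F → ‖cfc f N₁ - cfc f N₂‖ ≤ C * ‖N₁ - N₂‖)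
    (p q : Fin n → ℂ) (hp : ∀ a, p a ∈ F) (hq : ∀ b, q b ∈ F) (δ : ℝ) (hδ : n ^ 2 * δ ≤ 1)
    (η : ℂ) (hη : ‖η‖ = 1) (hne : ∀ a b, p a ≠ q b)
    (hph : ∀ a b, ‖(p a - q b) - η * star (p a - q b)‖ ≤ δ * ‖p a - q b‖)
    (hm : ∀ a b, ‖(f (p a) - f (q b)) / (p a - q b) - if a ≤ b then 1 else 0‖ ≤ δ)
    (A : Fin n → Fin n → ℝ) (hA1 : ∀ a b, |A a b| ≤ 1)
    (hA : ∀ x : Fin n → ℂ, ∑ a, ‖∑ b, (A a b : ℂ) * x b‖ ^ 2 ≤ 4 * ∑ b, ‖x b‖ ^ 2)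
    (T : ℝ) (hT : n * T ≤ ∑ a, ∑ b, (if a ≤ b then A a b else 0)) :
    T ≤ 80 * C + 1 := by
  have hu : Orthonormal ℂ u := he.comp Sum.inl Sum.inl_injective
  have hv : Orthonormal ℂ v := he.comp Sum.inr Sum.inr_injective
  have huv : ∀ a b, inner ℂ (u a) (v b) = 0 := fun a b =>
    he.2 (show Sum.inl a ≠ Sum.inr b by simp)
  have : Nontrivial H := ⟨u ⟨0, hn⟩, 0, hu.ne_zero _⟩
  set φ := diagHom (Sum.elim u v) he (Sum.inl ⟨0, hn⟩) with hφ
  set d : Fin n ⊕ Fin n → ℂ := Sum.elim p q with hd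
  have hdF : ∀ i, d i ∈ F := by rintro (a | b); exacts [hp a, hq b]
  set x : Fin n → Fin n → ℂ := fun a b => A a b / (p a - q b) with hx
  set R : H →L[ℂ] H := ∑ a, ∑ b, x a b • rankOne ℂ (u a) (v b) +
    ∑ a, ∑ b, star (x a b) • rankOne ℂ (v b) (u a) with hR
  have hRs : IsSelfAdjoint R := by
    rw [IsSelfAdjoint, hR]
    simp [ContinuousLinearMap.star_eq_adjoint]
    rw [add_comm]
  have comm : ∀ d : Fin n ⊕ Fin n → ℂ, φ d * R - R * φ d =
      ∑ a, ∑ b, ((d (Sum.inl a) - d (Sum.inr b)) * x a b) • rankOne ℂ (u a) (v b) -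
      ∑ a, ∑ b, ((d (Sum.inl a) - d (Sum.inr b)) * star (x a b)) • rankOne ℂ (v b) (u a) := by
    intro d
    have r1 : ∀ a y, φ d * rankOne ℂ (u a) y = d (Sum.inl a) • rankOne ℂ (u a) y := fun a y =>
      diagHom_mul_rankOne (Sum.elim u v) he _ d (Sum.inl a) y
    have r2 : ∀ a y, φ d * rankOne ℂ (v a) y = d (Sum.inr a) • rankOne ℂ (v a) y := fun a y =>
      diagHom_mul_rankOne (Sum.elim u v) he _ d (Sum.inr a) y
    have r3 : ∀ a y, rankOne ℂ y (u a) * φ d = d (Sum.inl a) • rankOne ℂ y (u a) := fun a y =>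
      rankOne_mul_diagHom (Sum.elim u v) he _ d (Sum.inl a) y
    have r4 : ∀ a y, rankOne ℂ y (v a) * φ d = d (Sum.inr a) • rankOne ℂ y (v a) := fun a y =>
      rankOne_mul_diagHom (Sum.elim u v) he _ d (Sum.inr a) y
    rw [hR]
    simp only [mul_add, add_mul, Finset.mul_sum, Finset.sum_mul, mul_smul_comm, smul_mul_assoc,
      r1, r2, r3, r4, sub_mul, sub_smul, Finset.sum_sub_distrib, smul_smul]
    simp only [mul_comm (x _ _), mul_comm (star (x _ _))]
    abel
  have hce := commutator_est F f hf C hC h (φ d) (diagHom_normal _ _ _ _)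
    (diagHom_spectrum _ _ _ _ F hdF) R hRs
  rw [hφ, diagHom_cfc _ _ _ _ f hf, ← hφ, comm, comm] at hce
  set M := ∑ a, ∑ b, ((f (d (Sum.inl a)) - f (d (Sum.inr b))) * x a b) • rankOne ℂ (u a) (v b) -
      ∑ a, ∑ b, ((f (d (Sum.inl a)) - f (d (Sum.inr b))) * star (x a b)) •
        rankOne ℂ (v b) (u a) with hM
  set Y := ∑ a, ∑ b, (A a b : ℂ) • rankOne ℂ (u a) (v b) with hY
  have hYn : ‖Y‖ ≤ 2 := norm_sum_rankOne_le u v hu hv A hA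
  have hy0 : ∀ a b, p a - q b ≠ 0 := fun a b => sub_ne_zero.2 (hne a b)
  have hfirst : ∑ a, ∑ b, ((d (Sum.inl a) - d (Sum.inr b)) * x a b) • rankOne ℂ (u a) (v b) = Y := by
    rw [hY]
    refine Finset.sum_congr rfl fun a _ => Finset.sum_congr rfl fun b _ => ?_
    congr 1
    simp only [hd, hx, Sum.elim_inl, Sum.elim_inr]
    field_simp [hy0 a b]
  have hsecond : ∑ a, ∑ b, ((d (Sum.inl a) - d (Sum.inr b)) * star (x a b)) •
      rankOne ℂ (v b) (u a) = η • star Y + ∑ a, ∑ b,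
        ((A a b : ℂ) * ((p a - q b) / star (p a - q b) - η)) • rankOne ℂ (v b) (u a) := by
    have : star Y = ∑ a, ∑ b, (A a b : ℂ) • rankOne ℂ (v b) (u a) := by
      rw [hY]; simp [ContinuousLinearMap.star_eq_adjoint]
    rw [this]
    simp only [Finset.smul_sum, ← Finset.sum_add_distrib, smul_smul, ← add_smul]
    refine Finset.sum_congr rfl fun a _ => Finset.sum_congr rfl fun b _ => ?_
    congr 1
    simp only [hd, hx, Sum.elim_inl, Sum.elim_inr, star_div₀]
    rw [show star (A a b : ℂ) = A a b from Complex.conj_ofReal _]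
    ring
  have nrm : ∀ (z : Fin n → Fin n → ℂ) (w : Fin n → Fin n → H →L[ℂ] H),
      (∀ a b, ‖z a b‖ ≤ δ) → (∀ a b, ‖w a b‖ ≤ 1) → ‖∑ a, ∑ b, z a b • w a b‖ ≤ 1 := by
    intro z w hz hw
    calc _ ≤ ∑ a : Fin n, ∑ b : Fin n, δ := by
          refine norm_sum_le_of_le _ fun a _ => norm_sum_le_of_le _ fun b _ => ?_
          rw [norm_smul]
          have := hz a b
          have := hw a b
          nlinarith [norm_nonneg (z a b), norm_nonneg (w a b)]
      _ = n ^ 2 * δ := by simp; ring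
      _ ≤ 1 := hδ
  have hAc : ∀ a b, ‖(A a b : ℂ)‖ ≤ 1 := fun a b => by
    rw [Complex.norm_real]; exact hA1 a b
  have hthird : ‖∑ a, ∑ b,
        ((A a b : ℂ) * ((p a - q b) / star (p a - q b) - η)) • rankOne ℂ (v b) (u a)‖ ≤ 1 := by
    refine nrm _ _ (fun a b => ?_) (fun a b => by simp [hu.1 a, hv.1 b])
    have hs : star (p a - q b) ≠ 0 := star_ne_zero.2 (hy0 a b)
    have : ‖(p a - q b) / star (p a - q b) - η‖ ≤ δ := by
      rw [div_sub' hs, norm_div, norm_star, div_le_iff₀ (norm_pos_iff.2 (hy0 a b)), mul_comm _ η]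
      exact hph a b
    rw [norm_mul]
    nlinarith [norm_nonneg ((p a - q b) / star (p a - q b) - η), hAc a b, norm_nonneg (A a b : ℂ)]
  have hup : ‖M‖ ≤ 80 * C := by
    refine hce.trans ?_
    rw [hfirst, hsecond]
    have : ‖η • star Y‖ ≤ 2 := by rw [norm_smul, hη, norm_star, one_mul]; exact hYn
    have h3 := norm_add_le (η • star Y) (∑ a, ∑ b,
        ((A a b : ℂ) * ((p a - q b) / star (p a - q b) - η)) • rankOne ℂ (v b) (u a))
    have h4 := norm_sub_le Y (η • star Y + ∑ a, ∑ b,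
        ((A a b : ℂ) * ((p a - q b) / star (p a - q b) - η)) • rankOne ℂ (v b) (u a))
    nlinarith
  have nsum : ∀ w : Fin n → H, Orthonormal ℂ w → ‖∑ a, w a‖ ^ 2 = n := by
    intro w hw
    have := hw.inner_sum (fun _ => 1) (fun _ => 1) Finset.univ
    simp only [one_smul] at this
    rw [@norm_sq_eq_re_inner ℂ, this]
    simp
  have hinner : inner ℂ (∑ a, u a) (M (∑ b, v b)) =
      ∑ a, ∑ b, (f (p a) - f (q b)) / (p a - q b) * A a b := by
    have hMv : ∀ b', M (v b') = ∑ a, ((f (p a) - f (q b')) * x a b') • u a := by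
      intro b'
      simp [hM, huv, orthonormal_iff_ite.1 hv, hd]
    rw [map_sum]
    simp only [hMv]
    rw [Finset.sum_comm]
    simp only [← Finset.sum_smul]
    have := hu.inner_sum (fun _ => 1) (fun a => ∑ b, (f (p a) - f (q b)) * x a b) Finset.univ
    simp only [one_smul] at this
    rw [this]
    simp only [map_one, one_mul]
    refine Finset.sum_congr rfl fun a _ => Finset.sum_congr rfl fun b _ => ?_
    simp only [hx]; ring
  have hin2 : ‖inner ℂ (∑ a, u a) (M (∑ b, v b))‖ ≤ n * ‖M‖ := by
    have e1 := nsum u hu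
    have e2 := nsum v hv
    have e3 : ‖∑ a, u a‖ * ‖∑ a, v a‖ = n := by
      have : (‖∑ a, u a‖ * ‖∑ a, v a‖) ^ 2 = (n : ℝ) ^ 2 := by
        rw [mul_pow, e1, e2]; ring
      exact (sq_eq_sq₀ (by positivity) (by positivity)).1 this
    calc _ ≤ ‖∑ a, u a‖ * ‖M (∑ b, v b)‖ := norm_inner_le_norm _ _
      _ ≤ ‖∑ a, u a‖ * (‖M‖ * ‖∑ b, v b‖) := by gcongr; exact M.le_opNorm _
      _ = (‖∑ a, u a‖ * ‖∑ a, v a‖) * ‖M‖ := by ring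
      _ = _ := by rw [e3]
  have hdiff : ‖∑ a, ∑ b, (f (p a) - f (q b)) / (p a - q b) * A a b -
      ((∑ a, ∑ b, (if a ≤ b then A a b else 0) : ℝ) : ℂ)‖ ≤ 1 := by
    push_cast
    rw [← Finset.sum_sub_distrib]
    simp only [← Finset.sum_sub_distrib]
    calc _ ≤ ∑ a : Fin n, ∑ b : Fin n, δ := by
          refine norm_sum_le_of_le _ fun a _ => norm_sum_le_of_le _ fun b _ => ?_
          have e : (f (p a) - f (q b)) / (p a - q b) * A a b -
            (((if a ≤ b then A a b else 0 : ℝ)) : ℂ) =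
            ((f (p a) - f (q b)) / (p a - q b) - if a ≤ b then 1 else 0) * A a b := by
            split_ifs
            · ring
            · simp
          rw [e, norm_mul]
          have := hm a b
          have := hAc a b
          nlinarith [norm_nonneg ((f (p a) - f (q b)) / (p a - q b) - if a ≤ b then 1 else 0),
            norm_nonneg (A a b : ℂ)]
      _ = n ^ 2 * δ := by simp; ring
      _ ≤ 1 := hδ
  rw [← hinner] at hdiff
  have hn' : (1 : ℝ) ≤ n := by exact_mod_cast hn
  set s : ℝ := ∑ a, ∑ b, (if a ≤ b then A a b else 0)
  have hs : s ≤ n * ‖M‖ + 1 := by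
    have h1 : s ≤ ‖(s : ℂ)‖ := by rw [Complex.norm_real]; exact le_abs_self _
    have h2 := norm_sub_norm_le (s : ℂ) (inner ℂ (∑ a, u a) (M (∑ b, v b)))
    rw [norm_sub_rev] at h2
    linarith
  have : n * T ≤ n * (80 * C + 1) := by nlinarith
  exact le_of_mul_le_mul_left this (by linarith)
end

open Filter Topology in
lemma exists_seq_aux (F : Set ℂ) (c : ℂ) (l : Filter ℂ) [l.NeBot]
    (h1 : ∀ᶠ w in l, w ≠ 0 ∧ w + c ∈ F) (rel : ℕ → ℂ → ℂ → Prop)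
    (h2 : ∀ k : ℕ, ∀ v : ℂ, v ≠ 0 → ∀ᶠ w in l, rel k v w) :
    ∃ (ζ : ℂ) (w : ℕ → ℂ), ‖ζ‖ = 1 ∧ (∀ k, w k ≠ 0) ∧ (∀ k, w k + c ∈ F) ∧
      (∀ k : ℕ, (k + 1) * ‖w k - ‖w k‖ * ζ‖ ≤ ‖w k‖) ∧
      (∀ k, rel (k + 1) (w k) (w (k + 1))) := by
  have hle : map (fun w : ℂ => w / ‖w‖) l ≤ 𝓟 (Metric.sphere 0 1) := by
    rw [le_principal_iff, mem_map]
    filter_upwards [h1] with w hw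
    have : ‖w‖ ≠ 0 := norm_ne_zero_iff.2 hw.1
    simp [this]
  obtain ⟨ζ, hζ, hcl⟩ := (isCompact_sphere (0 : ℂ) 1).exists_clusterPt hle
  have hζ1 : ‖ζ‖ = 1 := by simpa using hζ
  have hfr : ∀ k : ℕ, ∃ᶠ w in l, ‖w / ‖w‖ - ζ‖ < 1 / ((k : ℝ) + 1) := by
    intro k
    have h3 : MapClusterPt ζ l (fun w : ℂ => w / ‖w‖) := hcl
    have := (mapClusterPt_iff_frequently.1 h3) (Metric.ball ζ (1 / ((k : ℝ) + 1)))
      (Metric.ball_mem_nhds _ (by positivity))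
    simpa [dist_eq_norm] using this
  have hex : ∀ (k : ℕ) (v : {v : ℂ // v ≠ 0}), ∃ w : {v : ℂ // v ≠ 0}, (w : ℂ) + c ∈ F ∧
      (k + 1) * ‖(w : ℂ) - ‖(w : ℂ)‖ * ζ‖ ≤ ‖(w : ℂ)‖ ∧ rel k v w := by
    intro k v
    obtain ⟨w, hw1, hw2, hw3⟩ := ((hfr k).and_eventually (h1.and (h2 k v v.2))).exists
    refine ⟨⟨w, hw2.1⟩, hw2.2, ?_, hw3⟩
    have hn : (0 : ℝ) < ‖w‖ := norm_pos_iff.2 hw2.1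
    have hn' : (‖w‖ : ℂ) ≠ 0 := by exact_mod_cast hn.ne'
    have e : w - ‖w‖ * ζ = ‖w‖ * (w / ‖w‖ - ζ) := by field_simp
    change (k + 1) * ‖w - ‖w‖ * ζ‖ ≤ ‖w‖
    rw [e, norm_mul, Complex.norm_real, norm_norm]
    rw [lt_div_iff₀ (by positivity)] at hw1
    nlinarith
  choose g hg1 hg2 hg3 using hex
  let s : ℕ → {v : ℂ // v ≠ 0} := fun k => Nat.rec (g 0 ⟨1, one_ne_zero⟩) (fun k v => g (k + 1) v) k
  have hs : ∀ k, s (k + 1) = g (k + 1) (s k) := fun k => rfl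
  refine ⟨ζ, fun k => Subtype.val (s k), hζ1, fun k => Subtype.prop (s k), fun k => ?_, fun k => ?_, fun k => ?_⟩
  · cases k with
    | zero => exact hg1 _ _
    | succ k => simp only [hs]; exact hg1 _ _
  · cases k with
    | zero => exact hg2 0 _
    | succ k => simp only [hs]; exact hg2 _ _
  · simp only [hs]; exact hg3 _ _

open Filter Topology in
lemma exists_seq (F : Set ℂ) (hinf : F.Infinite) :
    ∃ (c ζ : ℂ) (w : ℕ → ℂ), ‖ζ‖ = 1 ∧ (∀ k, w k ≠ 0) ∧ (∀ k, w k + c ∈ F) ∧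
      (∀ k : ℕ, (k + 1) * ‖w k - ‖w k‖ * ζ‖ ≤ ‖w k‖) ∧
      ((∀ k : ℕ, (k + 3) * ‖w (k + 1)‖ ≤ ‖w k‖) ∨ (∀ k : ℕ, (k + 3) * ‖w k‖ ≤ ‖w (k + 1)‖)) := by
  by_cases hb : Bornology.IsBounded F
  · obtain ⟨r, hr⟩ := hb.subset_closedBall 0
    obtain ⟨c, -, hc⟩ := hinf.exists_accPt_of_subset_isCompact (isCompact_closedBall (0 : ℂ) r) hr
    have hc' : (𝓝[≠] c ⊓ 𝓟 F).NeBot := hc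
    have hnb : (map (fun z => z - c) (𝓝[≠] c ⊓ 𝓟 F)).NeBot := hc'.map _
    obtain ⟨ζ, w, a1, a2, a3, a4, a5⟩ := exists_seq_aux F c (map (fun z => z - c) (𝓝[≠] c ⊓ 𝓟 F))
      (by
        rw [eventually_map]
        have e1 : ∀ᶠ z in 𝓝[≠] c ⊓ 𝓟 F, z ≠ c :=
          Eventually.filter_mono inf_le_left eventually_mem_nhdsWithin
        have e2 : ∀ᶠ z in 𝓝[≠] c ⊓ 𝓟 F, z ∈ F :=
          Eventually.filter_mono inf_le_right (mem_principal_self F)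
        filter_upwards [e1, e2] with z h1 h2
        exact ⟨sub_ne_zero.2 h1, by simpa using h2⟩)
      (fun k v w => (k + 2) * ‖w‖ ≤ ‖v‖)
      (by
        intro k v hv
        rw [eventually_map]
        have hv' : 0 < ‖v‖ := norm_pos_iff.2 hv
        have : ∀ᶠ z in 𝓝 c, z ∈ Metric.ball c (‖v‖ / (k + 2)) :=
          Metric.ball_mem_nhds _ (by positivity)
        have e1 : ∀ᶠ z in 𝓝[≠] c ⊓ 𝓟 F, z ∈ Metric.ball c (‖v‖ / (k + 2)) :=
          this.filter_mono (inf_le_left.trans inf_le_left)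
        filter_upwards [e1] with z hz
        rw [Metric.mem_ball, dist_eq_norm, lt_div_iff₀ (by positivity)] at hz
        linarith)
    refine ⟨c, ζ, w, a1, a2, a3, a4, Or.inl fun k => ?_⟩
    have := a5 k
    push_cast at this
    linarith
  · have hnb : (Bornology.cobounded ℂ ⊓ 𝓟 F).NeBot := by
      rw [inf_principal_neBot_iff]
      intro U hU
      by_contra hne
      rw [Set.not_nonempty_iff_eq_empty] at hne
      refine hb ((Bornology.isBounded_compl_iff (s := Uᶜᶜ).2 ?_).subset ?_)
      · simpa [Bornology.isCobounded_def] using hU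
      · intro z hz hz'
        have : z ∈ U ∩ F := ⟨by simpa using hz', hz⟩
        rw [hne] at this; exact this
    have hbig : ∀ r : ℝ, ∀ᶠ z in Bornology.cobounded ℂ ⊓ 𝓟 F, r < ‖z‖ := fun r =>
      (tendsto_norm_cobounded_atTop.eventually_gt_atTop r).filter_mono inf_le_left
    obtain ⟨ζ, w, a1, a2, a3, a4, a5⟩ := exists_seq_aux F 0 (Bornology.cobounded ℂ ⊓ 𝓟 F)
      (by
        have e2 : ∀ᶠ z in Bornology.cobounded ℂ ⊓ 𝓟 F, z ∈ F :=
          Eventually.filter_mono inf_le_right (mem_principal_self F)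
        filter_upwards [hbig 0, e2] with z h1 h2
        exact ⟨norm_pos_iff.1 h1, by simpa using h2⟩)
      (fun k v w => (k + 2) * ‖v‖ ≤ ‖w‖)
      (by
        intro k v hv
        filter_upwards [hbig ((k + 2) * ‖v‖)] with z hz
        exact hz.le)
    refine ⟨0, ζ, w, a1, a2, a3, a4, Or.inr fun k => ?_⟩
    have := a5 k
    push_cast at this
    linarith

/-- the ordering dichotomy for all pairs of indices -/
lemma lacunary_pairs (w : ℕ → ℂ)
    (h : (∀ k : ℕ, (k + 3) * ‖w (k + 1)‖ ≤ ‖w k‖) ∨ (∀ k : ℕ, (k + 3) * ‖w k‖ ≤ ‖w (k + 1)‖)) :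
    (∀ i j : ℕ, i < j → (i + 3) * ‖w j‖ ≤ ‖w i‖) ∨
    (∀ i j : ℕ, i < j → (i + 3) * ‖w i‖ ≤ ‖w j‖) := by
  rcases h with h | h
  · left
    have hanti : Antitone fun k => ‖w k‖ := antitone_nat_of_succ_le fun k => by
      nlinarith [h k, norm_nonneg (w (k + 1)), (Nat.cast_nonneg k : (0 : ℝ) ≤ k),
        mul_nonneg (Nat.cast_nonneg k : (0 : ℝ) ≤ k) (norm_nonneg (w (k + 1)))]
    intro i j hij
    refine le_trans ?_ (h i)
    gcongr
    exact hanti hij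
  · right
    have hmono : Monotone fun k => ‖w k‖ := monotone_nat_of_le_succ fun k => by
      nlinarith [h k, norm_nonneg (w k), (Nat.cast_nonneg k : (0 : ℝ) ≤ k),
        mul_nonneg (Nat.cast_nonneg k : (0 : ℝ) ≤ k) (norm_nonneg (w k))]
    intro i j hij
    exact (h i).trans (hmono hij)

lemma pair_est (N : ℝ) (hN : 4 ≤ N) (W s ζ : ℂ) (hζ : ‖ζ‖ = 1) (hW : W ≠ 0)
    (hs : N * ‖s‖ ≤ ‖W‖) (hph : N * ‖W - ‖W‖ * ζ‖ ≤ ‖W‖) :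
    W - s ≠ 0 ∧ ‖(W - s) - ζ ^ 2 * star (W - s)‖ ≤ 8 / N * ‖W - s‖ ∧
      ‖s / (W - s)‖ ≤ 8 / N := by
  have hW' : 0 < ‖W‖ := norm_pos_iff.2 hW
  have h1 : ‖W‖ - ‖s‖ ≤ ‖W - s‖ := norm_sub_norm_le _ _
  have h2 : ‖W‖ ≤ 2 * ‖W - s‖ := by nlinarith [norm_nonneg s]
  have hpos : 0 < ‖W - s‖ := by linarith
  have hN0 : 0 < N := by linarith
  refine ⟨norm_pos_iff.1 hpos, ?_, ?_⟩
  · have hzz : ζ * star ζ = 1 := by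
      have := Complex.mul_conj ζ
      rw [Complex.normSq_eq_norm_sq, hζ] at this
      simpa using this
    set E := (W - s) - ‖W‖ * ζ with hE
    have e : (W - s) - ζ ^ 2 * star (W - s) = E - ζ ^ 2 * star E := by
      rw [hE]
      have : star ((W - s) - ‖W‖ * ζ) = star (W - s) - ‖W‖ * star ζ := by
        rw [star_sub, star_mul']
        congr 2
        exact Complex.conj_ofReal _
      rw [this]
      linear_combination (-‖W‖ * ζ : ℂ) * hzz
    have hEn : ‖E‖ ≤ ‖W - ‖W‖ * ζ‖ + ‖s‖ := by
      have : E = (W - ‖W‖ * ζ) - s := by rw [hE]; ring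
      rw [this]; exact norm_sub_le _ _
    have : ‖E - ζ ^ 2 * star E‖ ≤ 2 * ‖E‖ := by
      refine (norm_sub_le _ _).trans ?_
      rw [norm_mul, norm_pow, hζ, norm_star]; linarith
    rw [e, div_mul_eq_mul_div, le_div_iff₀ hN0]
    nlinarith
  · rw [norm_div, div_le_div_iff₀ hpos hN0]
    nlinarith

lemma exists_indices (w : ℕ → ℂ)
    (h : (∀ i j : ℕ, i < j → (i + 3) * ‖w j‖ ≤ ‖w i‖) ∨
    (∀ i j : ℕ, i < j → (i + 3) * ‖w i‖ ≤ ‖w j‖)) (n N : ℕ) :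
    ∃ P Q : Fin n → ℕ, (∀ a, Even (P a)) ∧ (∀ b, ¬ Even (Q b)) ∧ (∀ a, N ≤ P a) ∧ (∀ b, N ≤ Q b) ∧
      (∀ a b, a ≤ b → N * ‖w (Q b)‖ ≤ ‖w (P a)‖) ∧
      (∀ a b, ¬ a ≤ b → N * ‖w (P a)‖ ≤ ‖w (Q b)‖) := by
  have weaken : ∀ (i : ℕ) (x y : ℝ), 0 ≤ x → N ≤ i → (i + 3) * x ≤ y → N * x ≤ y := by
    intro i x y hx hi hxy
    have : (N : ℝ) ≤ i := by exact_mod_cast hi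
    nlinarith
  rcases h with h | h
  · refine ⟨fun a => 2 * (N + a), fun b => 2 * (N + b) + 1, fun a => by simp, fun b => by simp,
      fun a => by dsimp only; omega, fun b => by dsimp only; omega, fun a b hab => ?_, fun a b hab => ?_⟩
    · rw [Fin.le_def] at hab
      exact weaken _ _ _ (norm_nonneg _) (by omega) (h (2 * (N + a)) (2 * (N + b) + 1) (by omega))
    · rw [Fin.le_def] at hab
      exact weaken _ _ _ (norm_nonneg _) (by omega) (h (2 * (N + b) + 1) (2 * (N + a)) (by omega))
  · refine ⟨fun a => 2 * (N + (n - a)), fun b => 2 * (N + (n - b - 1)) + 1, fun a => by simp,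
      fun b => by simp,
      fun a => by dsimp only; omega, fun b => by dsimp only; omega, fun a b hab => ?_, fun a b hab => ?_⟩
    · rw [Fin.le_def] at hab
      exact weaken _ _ _ (norm_nonneg _) (by omega)
        (h (2 * (N + (n - b - 1)) + 1) (2 * (N + (n - a))) (by omega))
    · rw [Fin.le_def] at hab
      exact weaken _ _ _ (norm_nonneg _) (by omega)
        (h (2 * (N + (n - a))) (2 * (N + (n - b - 1)) + 1) (by omega))

lemma exists_fun (w : ℕ → ℂ) (c : ℂ) (h0 : ∀ k, w k ≠ 0)
    (h : (∀ i j : ℕ, i < j → (i + 3) * ‖w j‖ ≤ ‖w i‖) ∨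
    (∀ i j : ℕ, i < j → (i + 3) * ‖w i‖ ≤ ‖w j‖)) :
    ∃ (f : ℂ → ℂ) (L : NNReal), LipschitzWith L f ∧
      ∀ k, f (w k + c) = if Even k then w k else 0 := by
  have hlt : ∀ i j, i < j → ‖w i‖ + ‖w j‖ ≤ 2 * ‖w i - w j‖ := by
    intro i j hij
    have hi : (0 : ℝ) ≤ i := Nat.cast_nonneg i
    have e1 := norm_sub_norm_le (w i) (w j)
    have e2 := norm_sub_norm_le (w j) (w i)
    rw [norm_sub_rev] at e2
    rcases h with h | h
    · have := h i j hij
      nlinarith [norm_nonneg (w j), mul_nonneg hi (norm_nonneg (w j))]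
    · have := h i j hij
      nlinarith [norm_nonneg (w i), mul_nonneg hi (norm_nonneg (w i))]
  have hne : ∀ i j, i ≠ j → ‖w i‖ + ‖w j‖ ≤ 2 * ‖w i - w j‖ := by
    intro i j hij
    rcases lt_or_gt_of_ne hij with hij | hij
    · exact hlt i j hij
    · rw [norm_sub_rev, add_comm]; exact hlt j i hij
  have hinj : ∀ i j, w i = w j → i = j := by
    intro i j hij
    by_contra hc
    have := hne i j hc
    rw [hij, sub_self, norm_zero] at this
    have := norm_pos_iff.2 (h0 j)
    linarith
  classical
  let g : ℂ → ℂ := fun z => if ∃ k, Even k ∧ z = w k + c then z - c else 0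
  have hg : ∀ k, g (w k + c) = if Even k then w k else 0 := by
    intro k
    have : (∃ k', Even k' ∧ w k + c = w k' + c) ↔ Even k := by
      constructor
      · rintro ⟨k', hk', he⟩
        rw [hinj k k' (add_right_cancel he)]; exact hk'
      · exact fun hk => ⟨k, hk, rfl⟩
    simp only [g, this]
    simp
  have hl : LipschitzOnWith 2 g (Set.range fun k => w k + c) := by
    refine LipschitzOnWith.of_dist_le_mul ?_
    rintro _ ⟨i, rfl⟩ _ ⟨j, rfl⟩
    simp only [hg, dist_eq_norm, add_sub_add_right_eq_sub]
    by_cases hij : i = j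
    · subst hij; simp
    · refine le_trans ?_ (hne i j hij)
      refine (norm_sub_le _ _).trans (add_le_add ?_ ?_) <;> split_ifs <;> simp
  obtain ⟨f, hf1, hf2⟩ := hl.extend_finite_dimension
  refine ⟨f, _, hf1, fun k => ?_⟩
  rw [← hf2 (Set.mem_range_self k), hg]

/-- If `F` is a closed infinite subset of `ℂ`, then there is a function
`f : ℂ → ℂ` which is Lipschitz on `F` (with some constant `L ≥ 0`) but not
operator Lipschitz on `F`: for every `C ≥ 0` there are bounded normal operators
`N₁`, `N₂` on `ℓ²(ℕ, ℂ)` with spectra in `F` such that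
`‖f(N₁) - f(N₂)‖ > C * ‖N₁ - N₂‖`. -/
theorem stmt_18 (F : Set ℂ) (hF : IsClosed F) (hinf : F.Infinite) :
    ∃ (f : ℂ → ℂ) (L : ℝ), 0 ≤ L ∧
      (∀ z ∈ F, ∀ w ∈ F, ‖f z - f w‖ ≤ L * ‖z - w‖) ∧
      ∀ C : ℝ, 0 ≤ C →
        ∃ N₁ N₂ : lp (fun _ : ℕ => ℂ) 2 →L[ℂ] lp (fun _ : ℕ => ℂ) 2,
          IsStarNormal N₁ ∧ IsStarNormal N₂ ∧
          spectrum ℂ N₁ ⊆ F ∧ spectrum ℂ N₂ ⊆ F ∧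
          C * ‖N₁ - N₂‖ < ‖cfc f N₁ - cfc f N₂‖ := by
  obtain ⟨c, ζ, w, hζ, hw0, hwF, hph, hlac⟩ := exists_seq F hinf
  have hpairs := lacunary_pairs w hlac
  obtain ⟨f, L, hfL, hfw⟩ := exists_fun w c hw0 hpairs
  refine ⟨f, L, L.2, fun z _ z' _ => ?_, fun C hC => ?_⟩
  · have := hfL.dist_le_mul z z'
    rwa [dist_eq_norm, dist_eq_norm] at this
  by_contra hcon
  push Not at hcon
  obtain ⟨n, A, hn, hA1, hA2, hA3⟩ := exists_matrix' (80 * C + 2)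
  set N : ℕ := 8 * n ^ 2 + 4 with hN
  have hN4 : (4 : ℝ) ≤ N := by rw [hN]; push_cast; nlinarith [sq_nonneg (n : ℝ)]
  obtain ⟨P, Q, hP, hQ, hPN, hQN, hle, hgt⟩ := exists_indices w hpairs n N
  have hphN : ∀ k, N ≤ k → (N : ℝ) * ‖w k - ‖w k‖ * ζ‖ ≤ ‖w k‖ := by
    intro k hk
    refine le_trans ?_ (hph k)
    have : (N : ℝ) ≤ k := by exact_mod_cast hk
    gcongr
    linarith
  have hb : Orthonormal ℂ (HilbertBasis.ofRepr
      (LinearIsometryEquiv.refl ℂ (lp (fun _ : ℕ => ℂ) 2))) := HilbertBasis.orthonormal _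
  set e := HilbertBasis.ofRepr (LinearIsometryEquiv.refl ℂ (lp (fun _ : ℕ => ℂ) 2))
  have he : Orthonormal ℂ (Sum.elim (fun a : Fin n => e (2 * (a : ℕ)))
      (fun a : Fin n => e (2 * (a : ℕ) + 1))) := by
    have hinj : Function.Injective (Sum.elim (fun a : Fin n => 2 * (a : ℕ))
        (fun a : Fin n => 2 * (a : ℕ) + 1)) := by
      rintro (a | a) (b | b) hab <;> simp at hab <;> first | omega | skip
      · rw [Fin.ext hab]
      · rw [Fin.ext hab]
    have := hb.comp _ hinj
    convert this using 1
    ext1 (a | a) <;> rfl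
  have key : ∀ a b, w (P a) - w (Q b) ≠ 0 ∧
      ‖(w (P a) - w (Q b)) - ζ ^ 2 * star (w (P a) - w (Q b))‖ ≤ 8 / N * ‖w (P a) - w (Q b)‖ ∧
      ‖w (P a) / (w (P a) - w (Q b)) - if a ≤ b then 1 else 0‖ ≤ 8 / N := by
    intro a b
    by_cases hab : a ≤ b
    · obtain ⟨k1, k2, k3⟩ := pair_est N hN4 (w (P a)) (w (Q b)) ζ hζ (hw0 _) (hle a b hab)
        (hphN _ (hPN a))
      refine ⟨k1, k2, ?_⟩
      rw [if_pos hab]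
      convert k3 using 2
      field_simp
      ring
    · obtain ⟨k1, k2, k3⟩ := pair_est N hN4 (w (Q b)) (w (P a)) ζ hζ (hw0 _) (hgt a b hab)
        (hphN _ (hQN b))
      have hneg : w (P a) - w (Q b) = -(w (Q b) - w (P a)) := by ring
      rw [if_neg hab, hneg]
      refine ⟨neg_ne_zero.2 k1, ?_, ?_⟩
      · rw [norm_neg, star_neg, mul_neg, sub_neg_eq_add, neg_add_eq_sub, norm_sub_rev]
        exact k2
      · rw [sub_zero, div_neg, norm_neg]
        exact k3
  have := main_est _ _ he hn F f hfL.continuous C hC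
    (fun N₁ N₂ a1 a2 a3 a4 => hcon N₁ N₂ a1 a2 a3 a4)
    (fun a => w (P a) + c) (fun b => w (Q b) + c) (fun a => hwF _) (fun b => hwF _) (8 / N)
    (by
      rw [mul_div_assoc', div_le_one (by linarith), hN]; push_cast; linarith)
    (ζ ^ 2) (by rw [norm_pow, hζ, one_pow])
    (fun a b => by
      have := (key a b).1
      intro h
      exact this (sub_eq_zero.2 (add_right_cancel h)))
    (fun a b => by
      simp only [add_sub_add_right_eq_sub]
      exact (key a b).2.1)
    (fun a b => by
      simp only [add_sub_add_right_eq_sub, hfw, if_pos (hP a), if_neg (hQ b), sub_zero]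
      exact (key a b).2.2)
    A hA1 hA2 (80 * C + 2) hA3
  linarith
end

section
/- Transfer of operator Lipschitzness from the line to the circle: Let f : ℂ → ℂ be continuous and define g : ℂ → ℂ by g(z) = f(exp(i·z)). Let M ≥ 0 and suppose that for every complex Hilbert space H and all bounded self-adjoint operators A, B on H, ‖g(A) − g(B)‖ ≤ M·‖A − B‖ (i.e. the 2π-periodic function x ↦ f(e^{ix}) is operator Lipschitz on ℝ with constant M). Then for every complex Hilbert space H and all unitary operators U, V on H, ‖f(U) − f(V)‖ ≤ (3·√2·π/2)·M·‖U − V‖. -/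
set_option linter.unusedSectionVars false
namespace OpLip
open ContinuousLinearMap

section
variable {H K : Type} [NormedAddCommGroup H] [InnerProductSpace ℂ H] [CompleteSpace H]
  [NormedAddCommGroup K] [InnerProductSpace ℂ K] [CompleteSpace K]

/-- The general block operator. -/
noncomputable def blk (A : H →L[ℂ] H) (Y : K →L[ℂ] H) (Z : H →L[ℂ] K) (B : K →L[ℂ] K) :
    WithLp 2 (H × K) →L[ℂ] WithLp 2 (H × K) :=
  (WithLp.prodContinuousLinearEquiv 2 ℂ H K).symm.toContinuousLinearMap ∘L
    ((A ∘L WithLp.fstL 2 ℂ H K + Y ∘L WithLp.sndL 2 ℂ H K).prod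
     (Z ∘L WithLp.fstL 2 ℂ H K + B ∘L WithLp.sndL 2 ℂ H K))

theorem blk_apply (A : H →L[ℂ] H) (Y : K →L[ℂ] H) (Z : H →L[ℂ] K) (B : K →L[ℂ] K)
    (x : WithLp 2 (H × K)) :
    blk A Y Z B x = WithLp.toLp 2 (A x.fst + Y x.snd, Z x.fst + B x.snd) := rfl

theorem blk_star (A : H →L[ℂ] H) (Y : K →L[ℂ] H) (Z : H →L[ℂ] K) (B : K →L[ℂ] K) :
    star (blk A Y Z B) = blk (adjoint A) (adjoint Z) (adjoint Y) (adjoint B) := by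
  rw [star_eq_adjoint]
  symm
  rw [ContinuousLinearMap.eq_adjoint_iff]
  intro x y
  simp only [blk_apply, WithLp.prod_inner_apply, inner_add_left, inner_add_right,
    adjoint_inner_left]
  simp only [WithLp.fst, WithLp.snd]
  ring

theorem blk_mul (A A' : H →L[ℂ] H) (Y Y' : K →L[ℂ] H) (Z Z' : H →L[ℂ] K) (B B' : K →L[ℂ] K) :
    blk A Y Z B * blk A' Y' Z' B' =
      blk (A ∘L A' + Y ∘L Z') (A ∘L Y' + Y ∘L B') (Z ∘L A' + B ∘L Z') (Z ∘L Y' + B ∘L B') := by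
  ext x
  change blk A Y Z B (blk A' Y' Z' B' x) = _
  simp only [blk_apply, add_apply, comp_apply]
  congr 2
  · change A (A' x.fst + Y' x.snd) + Y (Z' x.fst + B' x.snd) = _
    simp only [map_add]; abel
  · change Z (A' x.fst + Y' x.snd) + B (Z' x.fst + B' x.snd) = _
    simp only [map_add]; abel

theorem blk_sub (A A' : H →L[ℂ] H) (Y Y' : K →L[ℂ] H) (Z Z' : H →L[ℂ] K) (B B' : K →L[ℂ] K) :
    blk A Y Z B - blk A' Y' Z' B' = blk (A - A') (Y - Y') (Z - Z') (B - B') := by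
  ext x
  simp only [sub_apply, blk_apply, ← WithLp.toLp_sub, Prod.mk_sub_mk]
  congr 2 <;> abel

/-- diagonal star hom -/
noncomputable def dhom : ((H →L[ℂ] H) × (K →L[ℂ] K)) →⋆ₐ[ℂ]
    (WithLp 2 (H × K) →L[ℂ] WithLp 2 (H × K)) where
  toFun p := blk p.1 0 0 p.2
  map_one' := by ext x; simp [blk_apply]; rfl
  map_mul' p q := by simp [blk_mul]; rfl
  map_zero' := by ext x; simp [blk_apply]
  map_add' p q := by ext x; simp [blk_apply, ← WithLp.toLp_add]
  commutes' r := by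
    ext x; simp [blk_apply, Algebra.algebraMap_eq_smul_one]; rfl
  map_star' p := by
    rw [blk_star]; simp [star_eq_adjoint]

theorem dhom_apply (A : H →L[ℂ] H) (B : K →L[ℂ] K) : dhom (A, B) = blk A 0 0 B := rfl

theorem cfc_blk (g : ℂ → ℂ) (hg : Continuous g) (A : H →L[ℂ] H) (B : K →L[ℂ] K)
    (hA : IsStarNormal A) (hB : IsStarNormal B) :
    cfc g (blk A 0 0 B) = blk (cfc g A) 0 0 (cfc g B) := by
  have hp : IsStarNormal ((A, B) : (H →L[ℂ] H) × (K →L[ℂ] K)) :=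
    ⟨by ext1 <;> simp [hA.star_comm_self.eq, hB.star_comm_self.eq]⟩
  rw [← dhom_apply, ← dhom_apply, ← cfc_map_prod (S := ℂ) g A B hg.continuousOn hp hA hB]
  refine (StarAlgHomClass.map_cfc dhom g (A, B) hg.continuousOn ?_ hp ?_).symm
  · exact map_continuous dhom
  · exact hp.map dhom

theorem norm_blk_off_le (Z : K →L[ℂ] H) :
    ‖blk 0 Z (-adjoint Z) 0‖ ≤ ‖Z‖ := by
  refine opNorm_le_bound _ (norm_nonneg _) fun x => ?_
  refine le_of_sq_le_sq ?_ (by positivity)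
  rw [mul_pow, WithLp.prod_norm_sq_eq_of_L2, WithLp.prod_norm_sq_eq_of_L2 x]
  simp only [blk_apply, zero_apply, zero_add, add_zero, neg_apply]
  change ‖Z x.snd‖ ^ 2 + ‖-adjoint Z x.fst‖ ^ 2 ≤ _
  rw [norm_neg]
  have h1 : ‖Z x.snd‖ ^ 2 ≤ ‖Z‖ ^ 2 * ‖x.snd‖ ^ 2 := by
    rw [← mul_pow]; gcongr; exact Z.le_opNorm _
  have h2 : ‖adjoint Z x.fst‖ ^ 2 ≤ ‖Z‖ ^ 2 * ‖x.fst‖ ^ 2 := by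
    rw [← mul_pow]; gcongr
    simpa using (adjoint Z).le_opNorm x.fst
  linarith

theorem norm_le_blk (A : H →L[ℂ] H) (Y : K →L[ℂ] H) (Z : H →L[ℂ] K) (B : K →L[ℂ] K) :
    ‖Y‖ ≤ ‖blk A Y Z B‖ := by
  refine opNorm_le_bound _ (norm_nonneg _) fun k => ?_
  have h := (blk A Y Z B).le_opNorm (WithLp.toLp 2 (0, k))
  have h3 : ‖(WithLp.toLp 2 ((0 : H), k))‖ = ‖k‖ := by
    rw [WithLp.prod_norm_eq_of_L2]; simp
  rw [h3] at h
  refine le_trans ?_ h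
  refine le_of_sq_le_sq ?_ (by positivity)
  rw [WithLp.prod_norm_sq_eq_of_L2]
  simp [blk_apply]

/-- Commutator estimate. -/
theorem comm_sa (g : ℂ → ℂ) (hg : Continuous g) (M : ℝ)
    (hlip : ∀ A B : H →L[ℂ] H, IsSelfAdjoint A → IsSelfAdjoint B →
      ‖cfc g A - cfc g B‖ ≤ M * ‖A - B‖)
    (A X : H →L[ℂ] H) (hA : IsSelfAdjoint A) (hX : IsSelfAdjoint X) :
    ‖cfc g A * X - X * cfc g A‖ ≤ M * ‖A * X - X * A‖ := by
  let u : ℝ → (H →L[ℂ] H) := fun s => NormedSpace.exp (s • (Complex.I • X))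
  have hd : ∀ T : H →L[ℂ] H,
      HasDerivAt (fun s => T * u s - u s * T) (T * (Complex.I • X) - (Complex.I • X) * T) 0 := by
    intro T
    have h := hasDerivAt_exp_smul_const (𝕂 := ℝ) (Complex.I • X) (0 : ℝ)
    simp only [zero_smul, NormedSpace.exp_zero, one_mul] at h
    exact (h.const_mul T).sub (h.mul_const T)
  have hslope : ∀ T : H →L[ℂ] H, Filter.Tendsto (fun s : ℝ => ‖s⁻¹ • (T * u s - u s * T)‖)
      (nhdsWithin 0 {0}ᶜ) (nhds ‖T * X - X * T‖) := by
    intro T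
    have h := (hasDerivAt_iff_tendsto_slope_zero.1 (hd T)).norm
    have h0 : u 0 = 1 := by simp [u]
    simp only [zero_add, h0, mul_one, one_mul, sub_self, sub_zero] at h
    convert h using 2
    rw [mul_smul_comm, smul_mul_assoc, ← smul_sub, norm_smul]; simp
  have hu : ∀ s, u s ∈ unitary (H →L[ℂ] H) := by
    intro s
    have hs : IsSelfAdjoint (s • X) := IsSelfAdjoint.smul (by simp [IsSelfAdjoint]) hX
    have := (selfAdjoint.expUnitary ⟨s • X, hs⟩).2
    rw [selfAdjoint.expUnitary_coe] at this
    simpa only [u, smul_comm s Complex.I X] using this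
  refine le_of_tendsto_of_tendsto (hslope (cfc g A)) ((hslope A).const_mul M) ?_
  refine Filter.Eventually.of_forall fun s => ?_
  let φ := Unitary.conjStarAlgAut ℂ (H →L[ℂ] H) ⟨u s, hu s⟩
  have hφ : ∀ T, φ T = u s * T * star (u s) := fun T => rfl
  have hφA : IsSelfAdjoint (φ A) := hA.map φ
  have h1 : φ (cfc g A) = cfc g (φ A) :=
    StarAlgHomClass.map_cfc φ g A hg.continuousOn (by
      have : (φ : (H →L[ℂ] H) → (H →L[ℂ] H)) = fun T => u s * T * star (u s) := rfl
      rw [this]; fun_prop) hA.isStarNormal hφA.isStarNormal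
  have h2 := hlip A (φ A) hA hφA
  rw [← h1] at h2
  have h3 : ∀ T : H →L[ℂ] H, ‖T - φ T‖ = ‖T * u s - u s * T‖ := by
    intro T
    rw [← CStarRing.norm_mul_mem_unitary (T - φ T) (hu s), hφ, sub_mul, mul_assoc _ (star (u s)),
      Unitary.star_mul_self_of_mem (hu s), mul_one]
  rw [h3, h3] at h2
  simp only [norm_smul]
  calc _ ≤ ‖s⁻¹‖ * (M * ‖A * u s - u s * A‖) := by gcongr
    _ = _ := by ring

theorem comm_gen (g : ℂ → ℂ) (hg : Continuous g) (M : ℝ) (hM : 0 ≤ M)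
    (hlip : ∀ A B : WithLp 2 (H × K) →L[ℂ] WithLp 2 (H × K), IsSelfAdjoint A → IsSelfAdjoint B →
      ‖cfc g A - cfc g B‖ ≤ M * ‖A - B‖)
    (A : H →L[ℂ] H) (B : K →L[ℂ] K) (Y : K →L[ℂ] H) (hA : IsSelfAdjoint A)
    (hB : IsSelfAdjoint B) :
    ‖cfc g A ∘L Y - Y ∘L cfc g B‖ ≤ M * ‖A ∘L Y - Y ∘L B‖ := by
  have hX : IsSelfAdjoint (blk 0 Y (adjoint Y) 0) := by
    rw [IsSelfAdjoint, blk_star]; simp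
  have hAB : IsSelfAdjoint (blk A 0 0 B) := by
    rw [IsSelfAdjoint, blk_star, ← star_eq_adjoint A, ← star_eq_adjoint B, hA.star_eq, hB.star_eq]
    simp
  have h := comm_sa g hg M hlip _ _ hAB hX
  rw [cfc_blk g hg A B hA.isStarNormal hB.isStarNormal] at h
  simp only [blk_mul, blk_sub, zero_comp, comp_zero, zero_add, add_zero, sub_zero] at h
  refine (norm_le_blk _ _ _ _).trans (h.trans ?_)
  gcongr
  have h5 := norm_blk_off_le (A ∘L Y - Y ∘L B)
  have h6 : B ∘L adjoint Y - adjoint Y ∘L A = -adjoint (A ∘L Y - Y ∘L B) := by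
    rw [map_sub, adjoint_comp, adjoint_comp, ← star_eq_adjoint A, ← star_eq_adjoint B, hA.star_eq,
      hB.star_eq]
    abel
  rw [h6]
  exact h5
end
end OpLip

set_option linter.unusedSectionVars false
namespace OpLip
open ContinuousLinearMap
section
variable {H K : Type} [NormedAddCommGroup H] [InnerProductSpace ℂ H] [CompleteSpace H]
  [NormedAddCommGroup K] [InnerProductSpace ℂ K] [CompleteSpace K]

/-- The two-sided unitary flow. -/
noncomputable def flow (A : H →L[ℂ] H) (B : K →L[ℂ] K) (T : K →L[ℂ] H) (z : ℂ) : K →L[ℂ] H :=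
  NormedSpace.exp (z • (Complex.I • A)) ∘L (T ∘L NormedSpace.exp (z • (-(Complex.I • B))))

/-- Its generator. -/
noncomputable def gen (A : H →L[ℂ] H) (B : K →L[ℂ] K) (T : K →L[ℂ] H) : K →L[ℂ] H :=
  Complex.I • (A ∘L T - T ∘L B)

theorem flow_deriv (A : H →L[ℂ] H) (B : K →L[ℂ] K) (T : K →L[ℂ] H) (z : ℂ) :
    HasDerivAt (flow A B T) (flow A B (gen A B T) z) z := by
  have h1 := hasDerivAt_exp_smul_const (𝕂 := ℂ) (Complex.I • A) z
  have h2 := hasDerivAt_exp_smul_const' (𝕂 := ℂ) (-(Complex.I • B)) z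
  have h3 := h1.clm_comp ((hasDerivAt_const z T).clm_comp h2)
  refine h3.congr_deriv ?_
  ext k
  simp [flow, gen, smul_sub]
  abel

theorem flow_deriv_real (A : H →L[ℂ] H) (B : K →L[ℂ] K) (T : K →L[ℂ] H) (s : ℝ) :
    HasDerivAt (fun s : ℝ => flow A B T s) (flow A B (gen A B T) s) s := by
  have h := (flow_deriv A B T (s : ℂ)).scomp s (Complex.ofRealCLM.hasDerivAt (x := s))
  exact h.congr_deriv (by simp)

theorem flow_deriv_real_neg (A : H →L[ℂ] H) (B : K →L[ℂ] K) (T : K →L[ℂ] H) (s : ℝ) :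
    HasDerivAt (fun s : ℝ => flow A B T (-s)) (-flow A B (gen A B T) (-s)) s := by
  have h := (flow_deriv A B T (-(s : ℂ))).scomp s (Complex.ofRealCLM.hasDerivAt (x := s)).neg
  exact h.congr_deriv (by simp)

theorem norm_exp_le (A : H →L[ℂ] H) (hA : IsSelfAdjoint A) (s : ℝ) :
    ‖NormedSpace.exp ((s : ℂ) • (Complex.I • A))‖ ≤ 1 := by
  have hs : IsSelfAdjoint ((s : ℂ) • A) := IsSelfAdjoint.smul (by simp [IsSelfAdjoint]) hA
  have := (selfAdjoint.expUnitary ⟨(s : ℂ) • A, hs⟩).2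
  rw [selfAdjoint.expUnitary_coe] at this
  rw [smul_comm]
  have h2 := CStarRing.norm_mem_unitary_mul (1 : H →L[ℂ] H) this
  rw [mul_one] at h2
  rw [h2]
  exact ContinuousLinearMap.norm_id_le

theorem exp_split (X : H →L[ℂ] H) (a b c : ℂ) (h : a + b = c) :
    NormedSpace.exp (c • X) = NormedSpace.exp (a • X) * NormedSpace.exp (b • X) := by
  let _ : NormedAlgebra ℚ (H →L[ℂ] H) := NormedAlgebra.restrictScalars ℚ ℂ _
  rw [← NormedSpace.exp_add_of_commute, ← add_smul, h]
  exact ((Commute.refl _).smul_left _).smul_right _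

theorem norm_flow_le (A : H →L[ℂ] H) (B : K →L[ℂ] K) (hA : IsSelfAdjoint A) (hB : IsSelfAdjoint B)
    (T : K →L[ℂ] H) (s : ℝ) : ‖flow A B T s‖ ≤ ‖T‖ := by
  have h2 := norm_exp_le B hB (-s)
  have h3 : ((-s : ℝ) : ℂ) • Complex.I • B = (s : ℂ) • (-(Complex.I • B)) := by simp
  rw [h3] at h2
  calc _ ≤ ‖NormedSpace.exp ((s : ℂ) • (Complex.I • A))‖ *
        (‖T‖ * ‖NormedSpace.exp ((s : ℂ) • (-(Complex.I • B)))‖) :=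
        (opNorm_comp_le _ _).trans (by gcongr; exact opNorm_comp_le _ _)
    _ ≤ 1 * (‖T‖ * 1) := by
        gcongr
        exact norm_exp_le A hA s
    _ = _ := by ring

theorem bound_step {E : Type*} [NormedAddCommGroup E] [NormedSpace ℝ E] (G G' : ℝ → E)
    (b b' : ℝ → ℝ) (h0 : G 0 = 0) (hb0 : b 0 = 0) (hG : ∀ s, HasDerivAt G (G' s) s)
    (hb : ∀ s, HasDerivAt b (b' s) s) (h : ∀ s, 0 ≤ s → ‖G' s‖ ≤ b' s) :
    ∀ s, 0 ≤ s → ‖G s‖ ≤ b s := by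
  intro s hs
  refine image_norm_le_of_norm_deriv_right_le_deriv_boundary (a := 0) (b := s)
    (fun x _ => (hG x).continuousAt.continuousWithinAt) (fun x _ => (hG x).hasDerivWithinAt)
    (by simp [h0, hb0]) hb (fun x hx => h x hx.1) ⟨hs, le_rfl⟩

theorem est_half (A : H →L[ℂ] H) (B : K →L[ℂ] K) (hA : IsSelfAdjoint A) (hB : IsSelfAdjoint B)
    (L : ℝ) (hL0 : 0 ≤ L) (hL : ∀ T : K →L[ℂ] H, ‖A ∘L T - T ∘L B‖ ≤ L * ‖T‖) (Y : K →L[ℂ] H) :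
    ‖flow A B Y ((1 / 2 : ℝ) : ℂ) - flow A B Y (-((1 / 2 : ℝ) : ℂ)) - gen A B Y‖
      ≤ L ^ 2 * ‖gen A B Y‖ / 24 := by
  have hg : ∀ T, ‖gen A B T‖ ≤ L * ‖T‖ := fun T => by
    rw [gen, norm_smul]; simpa using hL T
  set D := gen A B Y with hD
  have hneg : ∀ (T : K →L[ℂ] H) (s : ℝ), ‖flow A B T (-(s : ℂ))‖ ≤ ‖T‖ := fun T s => by
    have := norm_flow_le A B hA hB T (-s)
    simpa using this
  have e0 : ∀ T, flow A B T 0 = T := fun T => by ext; simp [flow]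
  have e3 : ‖gen A B (gen A B D)‖ ≤ L ^ 2 * ‖D‖ := by
    calc _ ≤ L * (L * ‖D‖) := (hg _).trans (by gcongr; exact hg _)
      _ = _ := by ring
  have s2 : ∀ s : ℝ, 0 ≤ s → ‖flow A B (gen A B D) s - flow A B (gen A B D) (-s)‖
      ≤ 2 * (L ^ 2 * ‖D‖) * s := by
    refine bound_step _ _ _ (fun _ => 2 * (L ^ 2 * ‖D‖)) (by simp) (by simp)
      (fun s => (flow_deriv_real A B _ s).sub (flow_deriv_real_neg A B _ s))
      (fun s => by simpa using (hasDerivAt_id s).const_mul (2 * (L ^ 2 * ‖D‖))) ?_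
    intro s hs
    rw [sub_neg_eq_add]
    refine (norm_add_le _ _).trans ?_
    linarith [norm_flow_le A B hA hB (gen A B (gen A B D)) s, hneg (gen A B (gen A B D)) s]
  have s1 : ∀ s : ℝ, 0 ≤ s → ‖flow A B D s + flow A B D (-s) - (2 : ℝ) • D‖
      ≤ (L ^ 2 * ‖D‖) * s ^ 2 := by
    refine bound_step _ _ _ _ (by simp [e0, two_smul]) (by simp)
      (fun s => ((flow_deriv_real A B D s).add (flow_deriv_real_neg A B D s)).sub_const _)
      (fun s => (hasDerivAt_pow 2 s).const_mul (L ^ 2 * ‖D‖)) ?_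
    intro s hs
    rw [← sub_eq_add_neg]
    refine (s2 s hs).trans (le_of_eq ?_)
    push_cast; ring
  have s0 : ∀ s : ℝ, 0 ≤ s → ‖flow A B Y s - flow A B Y (-s) - (2 * s) • D‖
      ≤ (L ^ 2 * ‖D‖ / 3) * s ^ 3 := by
    refine bound_step _ _ _ _ (by simp) (by simp)
      (fun s => ((flow_deriv_real A B Y s).sub (flow_deriv_real_neg A B Y s)).sub
        (((hasDerivAt_id s).const_mul 2).smul_const D))
      (fun s => (hasDerivAt_pow 3 s).const_mul (L ^ 2 * ‖D‖ / 3)) ?_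
    intro s hs
    rw [sub_neg_eq_add, mul_one]
    refine (s1 s hs).trans (le_of_eq ?_)
    push_cast; ring
  have := s0 (1 / 2) (by norm_num)
  rw [show (2 * (1 / 2) : ℝ) = 1 by norm_num, one_smul] at this
  refine this.trans (le_of_eq ?_)
  ring

theorem est (A : H →L[ℂ] H) (B : K →L[ℂ] K) (hA : IsSelfAdjoint A) (hB : IsSelfAdjoint B)
    (L : ℝ) (hL0 : 0 ≤ L) (hL : ∀ T : K →L[ℂ] H, ‖A ∘L T - T ∘L B‖ ≤ L * ‖T‖) (Y : K →L[ℂ] H) :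
    (1 - L ^ 2 / 24) * ‖A ∘L Y - Y ∘L B‖ ≤
      ‖NormedSpace.exp (Complex.I • A) ∘L Y - Y ∘L NormedSpace.exp (Complex.I • B)‖ := by
  have h := est_half A B hA hB L hL0 hL Y
  have hn : ‖gen A B Y‖ = ‖A ∘L Y - Y ∘L B‖ := by rw [gen, norm_smul]; simp
  have hflow : flow A B Y ((1 / 2 : ℝ) : ℂ) - flow A B Y (-((1 / 2 : ℝ) : ℂ)) =
      NormedSpace.exp (((-(1 / 2) : ℝ) : ℂ) • (Complex.I • A)) ∘L
        ((NormedSpace.exp (Complex.I • A) ∘L Y - Y ∘L NormedSpace.exp (Complex.I • B)) ∘L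
        NormedSpace.exp (((-(1 / 2) : ℝ) : ℂ) • (Complex.I • B))) := by
    have ha : NormedSpace.exp (((1 / 2 : ℝ) : ℂ) • (Complex.I • A)) =
        NormedSpace.exp (((-(1 / 2) : ℝ) : ℂ) • (Complex.I • A)) *
          NormedSpace.exp (Complex.I • A) := by
      simpa using exp_split (Complex.I • A) ((-(1 / 2) : ℝ) : ℂ) 1 ((1 / 2 : ℝ) : ℂ)
        (by push_cast; norm_num)
    have hb : NormedSpace.exp (((1 / 2 : ℝ) : ℂ) • (Complex.I • B)) =
        NormedSpace.exp (Complex.I • B) *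
        NormedSpace.exp (((-(1 / 2) : ℝ) : ℂ) • (Complex.I • B)) := by
      simpa using exp_split (Complex.I • B) 1 ((-(1 / 2) : ℝ) : ℂ) ((1 / 2 : ℝ) : ℂ)
        (by push_cast; norm_num)
    have hc : ((1 / 2 : ℝ) : ℂ) • (-(Complex.I • B)) =
      ((-(1 / 2) : ℝ) : ℂ) • (Complex.I • B) := by simp
    have hd : (-((1 / 2 : ℝ) : ℂ)) • (-(Complex.I • B)) =
      ((1 / 2 : ℝ) : ℂ) • (Complex.I • B) := by simp
    have he : (-((1 / 2 : ℝ) : ℂ)) = ((-(1 / 2) : ℝ) : ℂ) := by push_cast; rfl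
    rw [flow, flow, hc, hd, ha, hb, he]
    ext k
    simp [mul_def]
  have hle : ‖flow A B Y ((1 / 2 : ℝ) : ℂ) - flow A B Y (-((1 / 2 : ℝ) : ℂ))‖ ≤
      ‖NormedSpace.exp (Complex.I • A) ∘L Y - Y ∘L NormedSpace.exp (Complex.I • B)‖ := by
    rw [hflow]
    set Q := NormedSpace.exp (Complex.I • A) ∘L Y - Y ∘L NormedSpace.exp (Complex.I • B)
    calc _ ≤ ‖NormedSpace.exp (((-(1 / 2) : ℝ) : ℂ) • (Complex.I • A))‖ *
        (‖Q‖ * ‖NormedSpace.exp (((-(1 / 2) : ℝ) : ℂ) • (Complex.I • B))‖) :=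
        (opNorm_comp_le _ _).trans (by gcongr; exact opNorm_comp_le _ _)
      _ ≤ 1 * (‖Q‖ * 1) := by
        gcongr
        · exact norm_exp_le A hA _
        · exact norm_exp_le B hB _
      _ = _ := by ring
  have h3 := norm_sub_norm_le (gen A B Y)
    (flow A B Y ((1 / 2 : ℝ) : ℂ) - flow A B Y (-((1 / 2 : ℝ) : ℂ)))
  rw [norm_sub_rev (gen A B Y)] at h3
  rw [hn] at h h3
  linarith
end
end OpLip

set_option linter.unusedSectionVars false
namespace OpLip
open ContinuousLinearMap

theorem exists_log (s : ℝ) (hs0 : 0 < s) (hs : s < Real.pi) :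
    ∃ a : ℂ → ℝ, Continuous a ∧ (∀ z, |a z| ≤ s) ∧
      ∀ z : ℂ, ‖z‖ = 1 → Real.cos s ≤ z.re → Complex.exp (Complex.I * a z) = z := by
  let S : Set ℂ := {z | ‖z‖ = 1 ∧ Real.cos s ≤ z.re}
  have hS : IsClosed S := (isClosed_eq continuous_norm continuous_const).inter
    (isClosed_le continuous_const Complex.continuous_re)
  have hre : ∀ z : ℂ, ‖z‖ = 1 → z.re = Real.cos z.arg := by
    intro z hz
    have := Complex.norm_mul_cos_arg z
    rw [hz, one_mul] at this
    exact this.symm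
  have harg : ∀ z ∈ S, |z.arg| ≤ s := by
    rintro z ⟨hz, hz2⟩
    by_contra! hlt
    have h1 := Real.cos_lt_cos_of_nonneg_of_le_pi hs0.le (Complex.abs_arg_le_pi z) hlt
    rw [Real.cos_abs, ← hre z hz] at h1
    linarith
  have hcont : ContinuousOn Complex.arg S := by
    intro z hz
    refine (Complex.continuousAt_arg ?_).continuousWithinAt
    rw [Complex.mem_slitPlane_iff_arg]
    refine ⟨fun h => ?_, fun h => ?_⟩
    · have := harg z hz
      rw [h, abs_of_pos Real.pi_pos] at this
      linarith
    · have := hz.1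
      simp [h] at this
  obtain ⟨g, hg⟩ := ContinuousMap.exists_restrict_eq hS
    (⟨fun z : S => Complex.arg z, hcont.domRestrict⟩ : C(S, ℝ))
  refine ⟨fun z => max (-s) (min s (g z)), by fun_prop, fun z => ?_, fun z hz hz2 => ?_⟩
  · rw [abs_le]
    exact ⟨le_max_left _ _, max_le (by linarith) (min_le_left _ _)⟩
  · have hzS : z ∈ S := ⟨hz, hz2⟩
    have h1 : g z = z.arg := congrArg (fun F : C(S, ℝ) => F ⟨z, hzS⟩) hg
    have h2 := abs_le.1 (harg z hzS)
    beta_reduce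
    rw [h1, min_eq_right h2.2, max_eq_right h2.1]
    have := Complex.norm_mul_exp_arg_mul_I z
    rw [hz] at this
    rw [mul_comm]
    simpa using this

theorem exists_log_center (c s : ℝ) (hs0 : 0 < s) (hs : s < Real.pi) :
    ∃ a : ℂ → ℝ, Continuous a ∧ (∀ z, |a z - c| ≤ s) ∧
      ∀ z : ℂ, ‖z‖ = 1 → Real.cos s ≤ (z * Complex.exp (-(Complex.I * c))).re →
        Complex.exp (Complex.I * a z) = z := by
  obtain ⟨a, h1, h2, h3⟩ := exists_log s hs0 hs
  refine ⟨fun z => c + a (z * Complex.exp (-(Complex.I * c))), by fun_prop, fun z => ?_,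
    fun z hz hz2 => ?_⟩
  · simpa using h2 _
  · have hn : ‖z * Complex.exp (-(Complex.I * c))‖ = 1 := by
      rw [norm_mul, hz, Complex.norm_exp]; simp
    have := h3 _ hn hz2
    push_cast
    rw [mul_add, Complex.exp_add, this, mul_comm z, ← mul_assoc, ← Complex.exp_add]
    simp

section
variable {H K : Type} [NormedAddCommGroup H] [InnerProductSpace ℂ H] [CompleteSpace H]
  [NormedAddCommGroup K] [InnerProductSpace ℂ K] [CompleteSpace K]

/-- functional calculus for real-valued functions -/
noncomputable def rc (a : ℂ → ℝ) (U : H →L[ℂ] H) : H →L[ℂ] H := cfc (fun z => (a z : ℂ)) U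

theorem rc_sa (a : ℂ → ℝ) (U : H →L[ℂ] H) : IsSelfAdjoint (rc a U) := by
  simp [rc, isSelfAdjoint_iff, ← cfc_star]

theorem norm_unit {U : H →L[ℂ] H} (hU : U ∈ unitary (H →L[ℂ] H)) {z : ℂ}
    (hz : z ∈ spectrum ℂ U) : ‖z‖ = 1 := by
  simpa using spectrum.subset_circle_of_unitary hU hz

theorem exp_eq_cfc (A : H →L[ℂ] H) (hA : IsSelfAdjoint A) :
    NormedSpace.exp (Complex.I • A) = cfc (fun z => Complex.exp (Complex.I * z)) A := by
  have hn : IsStarNormal A := hA.isStarNormal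
  rw [← CFC.complex_exp_eq_normedSpace_exp (a := Complex.I • A)]
  exact (cfc_comp_const_mul Complex.I Complex.exp A).symm

theorem loc_cfc {U : H →L[ℂ] H} (hU : U ∈ unitary (H →L[ℂ] H)) (a χ : ℂ → ℝ)
    (ha : Continuous a) (hχ : Continuous χ)
    (h : ∀ z : ℂ, ‖z‖ = 1 → χ z ≠ 0 → Complex.exp (Complex.I * a z) = z)
    (F : ℂ → ℂ) (hF : Continuous F) :
    rc χ U * cfc (fun z => F (Complex.exp (Complex.I * z))) (rc a U) = rc χ U * cfc F U := by
  have hn : IsStarNormal U := ⟨by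
    rw [Commute, SemiconjBy, Unitary.star_mul_self_of_mem hU, Unitary.mul_star_self_of_mem hU]⟩
  have hc : Continuous (fun z => F (Complex.exp (Complex.I * z))) := by fun_prop
  have ha' : Continuous (fun z => (a z : ℂ)) := by fun_prop
  have hχ' : Continuous (fun z => (χ z : ℂ)) := by fun_prop
  rw [rc, rc, ← cfc_comp' _ _ U hc.continuousOn ha'.continuousOn hn,
    ← cfc_mul _ (fun z => F (Complex.exp (Complex.I * (a z : ℂ)))) U hχ'.continuousOn
      (hc.comp ha').continuousOn,
    ← cfc_mul _ _ U hχ'.continuousOn hF.continuousOn]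
  refine cfc_congr fun z hz => ?_
  by_cases h0 : χ z = 0
  · simp [h0]
  · simp only [h z (norm_unit hU hz) h0]

theorem norm_rc_sub_le {U : H →L[ℂ] H} (hU : U ∈ unitary (H →L[ℂ] H)) (a : ℂ → ℝ)
    (ha : Continuous a) (c s : ℝ) (hs : 0 ≤ s) (h : ∀ z, |a z - c| ≤ s) :
    ‖rc a U - (c : ℂ) • 1‖ ≤ s := by
  have hn : IsStarNormal U := ⟨by
    rw [Commute, SemiconjBy, Unitary.star_mul_self_of_mem hU, Unitary.mul_star_self_of_mem hU]⟩
  have ha' : Continuous (fun z => (a z : ℂ)) := by fun_prop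
  rw [← Algebra.algebraMap_eq_smul_one, ← cfc_const (c : ℂ) U hn, rc,
    ← cfc_sub _ _ U ha'.continuousOn continuousOn_const]
  refine norm_cfc_le hs fun z _ => ?_
  rw [← Complex.ofReal_sub, Complex.norm_real]
  exact h z

theorem norm_blk_diag_le (P : H →L[ℂ] H) (Q : K →L[ℂ] K) (r : ℝ) (hP : ‖P‖ ≤ r) (hQ : ‖Q‖ ≤ r) :
    ‖blk P 0 0 Q‖ ≤ r := by
  rw [← dhom_apply]
  exact (NonUnitalStarAlgHom.norm_apply_le dhom (P, Q)).trans (max_le hP hQ)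

/-- row operator -/
noncomputable def row (P Q : H →L[ℂ] H) : WithLp 2 (H × H) →L[ℂ] H :=
  P ∘L WithLp.fstL 2 ℂ H H + Q ∘L WithLp.sndL 2 ℂ H H

theorem row_apply (P Q : H →L[ℂ] H) (x : WithLp 2 (H × H)) :
    row P Q x = P x.fst + Q x.snd := rfl

theorem row_blk (P Q R S : H →L[ℂ] H) : row P Q ∘L blk R 0 0 S = row (P * R) (Q * S) := by
  ext x
  simp only [comp_apply, row_apply, blk_apply, zero_apply, zero_add, add_zero]
  rfl

theorem comp_row (P Q R : H →L[ℂ] H) : R ∘L row P Q = row (R * P) (R * Q) := by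
  ext x
  simp [row_apply]

theorem row_adj (P Q : H →L[ℂ] H) (hP : IsSelfAdjoint P) (hQ : IsSelfAdjoint Q)
    (h : P * P + Q * Q = 1) : row P Q ∘L adjoint (row P Q) = 1 := by
  have h1 : ∀ x, adjoint (row P Q) x = WithLp.toLp 2 (P x, Q x) := by
    intro x
    refine ext_inner_right ℂ fun y => ?_
    rw [adjoint_inner_left, row_apply, inner_add_right, WithLp.prod_inner_apply]
    have e1 := adjoint_inner_left P y.fst x
    have e2 := adjoint_inner_left Q y.snd x
    rw [← star_eq_adjoint, hP.star_eq] at e1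
    rw [← star_eq_adjoint, hQ.star_eq] at e2
    rw [← e1, ← e2]
    rfl
  ext x
  rw [comp_apply, h1, row_apply]
  exact congrArg (fun T : H →L[ℂ] H => T x) h

theorem row_norm (P Q : H →L[ℂ] H) (hP : IsSelfAdjoint P) (hQ : IsSelfAdjoint Q)
    (h : P * P + Q * Q = 1) : ‖row P Q‖ ≤ 1 := by
  have h1 := norm_adjoint_comp_self (adjoint (row P Q))
  rw [adjoint_adjoint, row_adj P Q hP hQ h, LinearIsometryEquiv.norm_map] at h1
  have h2 : ‖(1 : H →L[ℂ] H)‖ ≤ 1 := norm_id_le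
  nlinarith [norm_nonneg (row P Q)]

end
end OpLip

set_option linter.unusedSectionVars false
namespace OpLip
open ContinuousLinearMap

theorem cutoff (c : ℝ) : ∃ ψ₁ ψ₂ : ℂ → ℝ, Continuous ψ₁ ∧ Continuous ψ₂ ∧
    (∀ z, ψ₁ z * ψ₁ z + ψ₂ z * ψ₂ z = 1) ∧
    (∀ z, ψ₁ z ≠ 0 → Real.cos (Real.pi / 2 + 1 / 10) ≤
      (z * Complex.exp (-(Complex.I * ((c + Real.pi / 2 : ℝ) : ℂ)))).re) ∧
    (∀ z, ψ₂ z ≠ 0 → Real.cos (Real.pi / 2 + 1 / 10) ≤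
      (z * Complex.exp (-(Complex.I * ((c - Real.pi / 2 : ℝ) : ℂ)))).re) := by
  let y : ℂ → ℝ := fun z => (z * Complex.exp (-(Complex.I * c))).im
  have hy : Continuous y := by fun_prop
  have hcos : Real.cos (Real.pi / 2 + 1 / 10) ≤ -(9 / 100) := by
    rw [add_comm, Real.cos_add_pi_div_two]
    have h2 := Real.sin_gt_sub_cube (x := 1 / 10) (by norm_num)
    norm_num at h2 ⊢
    linarith
  have e1 : ∀ z : ℂ, (z * Complex.exp (-(Complex.I * ((c + Real.pi / 2 : ℝ) : ℂ)))).re = y z := by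
    intro z
    have : Complex.exp (-(Complex.I * ((c + Real.pi / 2 : ℝ) : ℂ))) =
        Complex.exp (-(Complex.I * c)) * (-Complex.I) := by
      have h : -(Complex.I * ((c + Real.pi / 2 : ℝ) : ℂ)) =
        -(Complex.I * c) + -(Real.pi / 2 * Complex.I) := by push_cast; ring
      rw [h, Complex.exp_add, Complex.exp_neg (Real.pi / 2 * Complex.I),
        Complex.exp_pi_div_two_mul_I, Complex.inv_I]
    rw [this, ← mul_assoc]
    simp [y]
  have e2 : ∀ z : ℂ, (z * Complex.exp (-(Complex.I * ((c - Real.pi / 2 : ℝ) : ℂ)))).re = -y z := by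
    intro z
    have : Complex.exp (-(Complex.I * ((c - Real.pi / 2 : ℝ) : ℂ))) =
        Complex.exp (-(Complex.I * c)) * Complex.I := by
      have h : -(Complex.I * ((c - Real.pi / 2 : ℝ) : ℂ)) =
        -(Complex.I * c) + (Real.pi / 2 * Complex.I) := by push_cast; ring
      rw [h, Complex.exp_add, Complex.exp_pi_div_two_mul_I]
    rw [this, ← mul_assoc]
    simp [y]
  let q₁ : ℂ → ℝ := fun z => max (y z + 9 / 100) 0
  let q₂ : ℂ → ℝ := fun z => max (-y z + 9 / 100) 0
  have hq₁ : Continuous q₁ := by fun_prop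
  have hq₂ : Continuous q₂ := by fun_prop
  have hS : ∀ z, 0 < q₁ z * q₁ z + q₂ z * q₂ z := by
    intro z
    rcases le_total 0 (y z) with h | h
    · have : 0 < q₁ z := lt_max_of_lt_left (by linarith)
      nlinarith [mul_self_nonneg (q₂ z)]
    · have : 0 < q₂ z := lt_max_of_lt_left (by linarith)
      nlinarith [mul_self_nonneg (q₁ z)]
  have hsq : ∀ z, Real.sqrt (q₁ z * q₁ z + q₂ z * q₂ z) ≠ 0 := fun z =>
    (Real.sqrt_pos.2 (hS z)).ne'
  refine ⟨fun z => q₁ z / Real.sqrt (q₁ z * q₁ z + q₂ z * q₂ z),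
    fun z => q₂ z / Real.sqrt (q₁ z * q₁ z + q₂ z * q₂ z),
    hq₁.div (by fun_prop) hsq, hq₂.div (by fun_prop) hsq, fun z => ?_, fun z hz => ?_,
    fun z hz => ?_⟩
  · beta_reduce
    rw [div_mul_div_comm, div_mul_div_comm, Real.mul_self_sqrt (hS z).le, ← add_div,
      div_self (hS z).ne']
  · rw [e1]
    by_contra! hlt
    refine hz ?_
    have : q₁ z = 0 := max_eq_right (by linarith)
    simp [this]
  · rw [e2]
    by_contra! hlt
    refine hz ?_
    have : q₂ z = 0 := max_eq_right (by linarith)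
    simp [this]

section
variable {H K : Type} [NormedAddCommGroup H] [InnerProductSpace ℂ H] [CompleteSpace H]
  [NormedAddCommGroup K] [InnerProductSpace ℂ K] [CompleteSpace K]

theorem normal_of_unitary {U : H →L[ℂ] H} (hU : U ∈ unitary (H →L[ℂ] H)) : IsStarNormal U := ⟨by
    rw [Commute, SemiconjBy, Unitary.star_mul_self_of_mem hU, Unitary.mul_star_self_of_mem hU]⟩

theorem comm_rc {U : H →L[ℂ] H} (hU : U ∈ unitary (H →L[ℂ] H)) (a χ : ℂ → ℝ)
    (ha : Continuous a) (F : ℂ → ℂ) (hF : Continuous F) :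
    rc χ U * cfc F (rc a U) = cfc F (rc a U) * rc χ U := by
  have ha' : Continuous (fun z => (a z : ℂ)) := by fun_prop
  rw [rc, rc, ← cfc_comp' _ _ U hF.continuousOn ha'.continuousOn (normal_of_unitary hU)]
  exact cfc_commute_cfc _ _ _

theorem rc_sum_sq {V : H →L[ℂ] H} (hV : V ∈ unitary (H →L[ℂ] H)) (ψ₁ ψ₂ : ℂ → ℝ)
    (hψ₁ : Continuous ψ₁) (hψ₂ : Continuous ψ₂)
    (hψ : ∀ z, ψ₁ z * ψ₁ z + ψ₂ z * ψ₂ z = 1) :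
    rc ψ₁ V * rc ψ₁ V + rc ψ₂ V * rc ψ₂ V = 1 := by
  have hVn := normal_of_unitary hV
  have h1 : Continuous (fun z => (ψ₁ z : ℂ)) := by fun_prop
  have h2 : Continuous (fun z => (ψ₂ z : ℂ)) := by fun_prop
  rw [rc, rc, ← cfc_mul _ _ V h1.continuousOn h1.continuousOn,
    ← cfc_mul _ _ V h2.continuousOn h2.continuousOn,
    ← cfc_add V (fun z => (ψ₁ z : ℂ) * (ψ₁ z : ℂ)) (fun z => (ψ₂ z : ℂ) * (ψ₂ z : ℂ))
      (h1.mul h1).continuousOn (h2.mul h2).continuousOn, ← cfc_one ℂ V]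
  refine cfc_congr fun z _ => ?_
  have := hψ z
  simp only [Pi.one_apply]
  exact_mod_cast this

theorem blk_diag_sa (B₁ B₂ : H →L[ℂ] H) (hB₁ : IsSelfAdjoint B₁) (hB₂ : IsSelfAdjoint B₂) :
    IsSelfAdjoint (blk B₁ 0 0 B₂) := by
  rw [IsSelfAdjoint, blk_star, ← star_eq_adjoint B₁, ← star_eq_adjoint B₂, hB₁.star_eq,
    hB₂.star_eq]
  simp

theorem hL_aux (A : H →L[ℂ] H) (B : K →L[ℂ] K) (c : ℝ) (r s : ℝ)
    (n1 : ‖A - (c : ℂ) • 1‖ ≤ r) (n2 : ‖B - (c : ℂ) • 1‖ ≤ s) (X : K →L[ℂ] H) :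
    ‖A ∘L X - X ∘L B‖ ≤ (r + s) * ‖X‖ := by
  have e : A ∘L X - X ∘L B = (A - (c : ℂ) • 1) ∘L X - X ∘L (B - (c : ℂ) • 1) := by
    ext x; simp
  rw [e]
  have q1 := opNorm_comp_le (A - (c : ℂ) • 1) X
  have q2 := opNorm_comp_le X (B - (c : ℂ) • 1)
  have q3 := norm_sub_le ((A - (c : ℂ) • 1) ∘L X) (X ∘L (B - (c : ℂ) • 1))
  have q4 := mul_le_mul_of_nonneg_right n1 (norm_nonneg X)
  have q5 := mul_le_mul_of_nonneg_left n2 (norm_nonneg X)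
  linarith

theorem blk_sub_smul (B₁ B₂ : H →L[ℂ] H) (c : ℂ) :
    blk B₁ 0 0 B₂ - c • 1 = blk (B₁ - c • 1) 0 0 (B₂ - c • 1) := by
  rw [← dhom_apply, ← dhom_apply, ← map_one dhom, ← map_smul, ← map_sub]
  rfl

theorem hid_aux (U V : H →L[ℂ] H) (hU : U ∈ unitary (H →L[ℂ] H)) 
    (a b₁ b₂ χ ψ₁ ψ₂ : ℂ → ℝ) (ha : Continuous a)
    (F : ℂ → ℂ) (hF : Continuous F)
    (l1 : rc ψ₁ V * cfc (fun z => F (Complex.exp (Complex.I * z))) (rc b₁ V) =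
      rc ψ₁ V * cfc F V)
    (l2 : rc ψ₂ V * cfc (fun z => F (Complex.exp (Complex.I * z))) (rc b₂ V) =
      rc ψ₂ V * cfc F V)
    (l3 : rc χ U * cfc (fun z => F (Complex.exp (Complex.I * z))) (rc a U) =
      rc χ U * cfc F U) :
    cfc (fun z => F (Complex.exp (Complex.I * z))) (rc a U) ∘L
        (rc χ U ∘L row (rc ψ₁ V) (rc ψ₂ V)) -
      (rc χ U ∘L row (rc ψ₁ V) (rc ψ₂ V)) ∘L
        cfc (fun z => F (Complex.exp (Complex.I * z))) (blk (rc b₁ V) 0 0 (rc b₂ V)) =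
    (rc χ U * (cfc F U - cfc F V)) ∘L row (rc ψ₁ V) (rc ψ₂ V) := by
  have hc : Continuous (fun z => F (Complex.exp (Complex.I * z))) := by fun_prop
  have h1 : row (rc ψ₁ V) (rc ψ₂ V) ∘L
      cfc (fun z => F (Complex.exp (Complex.I * z))) (blk (rc b₁ V) 0 0 (rc b₂ V)) =
      cfc F V ∘L row (rc ψ₁ V) (rc ψ₂ V) := by
    rw [cfc_blk _ hc (rc b₁ V) (rc b₂ V) (rc_sa _ _).isStarNormal (rc_sa _ _).isStarNormal,
      row_blk, comp_row, l1, l2]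
    congr 1 <;> exact cfc_commute_cfc _ _ _
  have h2 : cfc (fun z => F (Complex.exp (Complex.I * z))) (rc a U) * rc χ U =
      rc χ U * cfc F U := by
    rw [← comm_rc hU a χ ha _ hc, l3]
  generalize cfc (fun z => F (Complex.exp (Complex.I * z))) (rc a U) = A' at *
  generalize cfc (fun z => F (Complex.exp (Complex.I * z))) (blk (rc b₁ V) 0 0 (rc b₂ V)) = B' at *
  generalize row (rc ψ₁ V) (rc ψ₂ V) = T at *
  rw [← comp_assoc, comp_assoc (rc χ U), h1, ← mul_def, h2, ← comp_assoc, ← mul_def, mul_sub,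
    sub_comp]

theorem key_core (f : ℂ → ℂ) (hf : Continuous f) (M : ℝ) (hM : 0 ≤ M)
    (hlip : ∀ (H : Type) [NormedAddCommGroup H] [InnerProductSpace ℂ H] [CompleteSpace H]
      (A B : H →L[ℂ] H), IsSelfAdjoint A → IsSelfAdjoint B →
      ‖cfc (fun z : ℂ => f (Complex.exp (Complex.I * z))) A -
          cfc (fun z : ℂ => f (Complex.exp (Complex.I * z))) B‖ ≤ M * ‖A - B‖)
    (U V : H →L[ℂ] H) (hU : IsStarNormal U) (hV : IsStarNormal V)
    (A P : H →L[ℂ] H) (B : K →L[ℂ] K) (T : K →L[ℂ] H)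
    (hA : IsSelfAdjoint A) (hB : IsSelfAdjoint B) (hT : ‖T‖ ≤ 1) (hP : ‖P‖ ≤ 1)
    (hTT : T ∘L adjoint T = 1)
    (hid : ∀ F : ℂ → ℂ, Continuous F →
      cfc (fun z => F (Complex.exp (Complex.I * z))) A ∘L (P ∘L T) -
        (P ∘L T) ∘L cfc (fun z => F (Complex.exp (Complex.I * z))) B =
      (P * (cfc F U - cfc F V)) ∘L T) (L : ℝ) (hL0 : 0 ≤ L) (hk : 0 ≤ 1 - L ^ 2 / 24)
    (hL : ∀ X : K →L[ℂ] H, ‖A ∘L X - X ∘L B‖ ≤ L * ‖X‖) :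
    (1 - L ^ 2 / 24) * ‖P * (cfc f U - cfc f V)‖ ≤ M * ‖U - V‖ := by
  have hg : Continuous fun z : ℂ => f (Complex.exp (Complex.I * z)) := by fun_prop
  have h0 := hlip (WithLp 2 (H × K))
  have hc1 := comm_gen (fun z : ℂ => f (Complex.exp (Complex.I * z))) hg
    M hM h0 A B (P ∘L T) hA hB
  rw [hid f hf] at hc1
  have hc2 := est A B hA hB L hL0 hL (P ∘L T)
  have hid2 := hid id continuous_id
  simp only [id] at hid2
  rw [cfc_id ℂ U, cfc_id ℂ V] at hid2
  rw [exp_eq_cfc A hA, exp_eq_cfc B hB, hid2] at hc2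
  have hc3 : ‖(P * (U - V)) ∘L T‖ ≤ ‖U - V‖ := by
    calc _ ≤ (‖P‖ * ‖U - V‖) * ‖T‖ := (opNorm_comp_le _ _).trans (by gcongr; exact norm_mul_le _ _)
      _ ≤ (1 * ‖U - V‖) * 1 := by gcongr
      _ = _ := by ring
  generalize cfc f U - cfc f V = Z at *
  have hc4 : ‖P * Z‖ ≤ ‖(P * Z) ∘L T‖ := by
    have e : P * Z = ((P * Z) ∘L T) ∘L adjoint T := by
      rw [comp_assoc, hTT]; rfl
    calc _ = ‖((P * Z) ∘L T) ∘L adjoint T‖ := by rw [← e]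
      _ ≤ ‖(P * Z) ∘L T‖ * ‖adjoint T‖ := opNorm_comp_le _ _
      _ ≤ ‖(P * Z) ∘L T‖ * 1 := by
        gcongr; rw [LinearIsometryEquiv.norm_map]; exact hT
      _ = _ := mul_one _
  calc _ ≤ (1 - L ^ 2 / 24) * (M * ‖A ∘L P ∘L T - (P ∘L T) ∘L B‖) := by
        gcongr; exact hc4.trans hc1
    _ = M * ((1 - L ^ 2 / 24) * ‖A ∘L P ∘L T - (P ∘L T) ∘L B‖) := by ring
    _ ≤ M * ‖U - V‖ := by gcongr; exact hc2.trans hc3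

theorem key (f : ℂ → ℂ) (hf : Continuous f) (M : ℝ) (hM : 0 ≤ M)
    (hlip : ∀ (H : Type) [NormedAddCommGroup H] [InnerProductSpace ℂ H] [CompleteSpace H]
      (A B : H →L[ℂ] H), IsSelfAdjoint A → IsSelfAdjoint B →
      ‖cfc (fun z : ℂ => f (Complex.exp (Complex.I * z))) A -
          cfc (fun z : ℂ => f (Complex.exp (Complex.I * z))) B‖ ≤ M * ‖A - B‖)
    (U V : H →L[ℂ] H) (hU : U ∈ unitary (H →L[ℂ] H)) (hV : V ∈ unitary (H →L[ℂ] H))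
    (c : ℝ) (χ : ℂ → ℝ) (hχ : Continuous χ) (hχ1 : ∀ z, |χ z| ≤ 1)
    (hsupp : ∀ z : ℂ, ‖z‖ = 1 → χ z ≠ 0 →
      Real.cos (4 / 5) ≤ (z * Complex.exp (-(Complex.I * c))).re) :
    (1 - (4 / 5 + (Real.pi + 1 / 10)) ^ 2 / 24) * ‖rc χ U * (cfc f U - cfc f V)‖ ≤
      M * ‖U - V‖ := by
  have hpi := Real.pi_gt_three
  have hpi2 := Real.pi_lt_d2
  obtain ⟨a, ha, hac, hae⟩ := exists_log_center c (4 / 5) (by norm_num) (by linarith)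
  obtain ⟨b₁, hb₁, hbc₁, hbe₁⟩ := exists_log_center (c + Real.pi / 2) (Real.pi / 2 + 1 / 10)
    (by linarith) (by linarith)
  obtain ⟨b₂, hb₂, hbc₂, hbe₂⟩ := exists_log_center (c - Real.pi / 2) (Real.pi / 2 + 1 / 10)
    (by linarith) (by linarith)
  obtain ⟨ψ₁, ψ₂, hψ₁, hψ₂, hψ, hs₁, hs₂⟩ := cutoff c
  have hsum := rc_sum_sq hV ψ₁ ψ₂ hψ₁ hψ₂ hψ
  have hP : ‖rc χ U‖ ≤ 1 := by
    refine norm_cfc_le zero_le_one fun z _ => ?_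
    rw [Complex.norm_real]; exact hχ1 z
  have n1 : ‖rc a U - (c : ℂ) • 1‖ ≤ 4 / 5 := norm_rc_sub_le hU a ha c _ (by norm_num) hac
  have m1 : ‖rc b₁ V - (c : ℂ) • 1‖ ≤ Real.pi + 1 / 10 := by
    refine norm_rc_sub_le hV _ hb₁ c _ (by linarith) fun z => ?_
    have := abs_le.1 (hbc₁ z)
    exact abs_le.2 ⟨by linarith, by linarith⟩
  have m2 : ‖rc b₂ V - (c : ℂ) • 1‖ ≤ Real.pi + 1 / 10 := by
    refine norm_rc_sub_le hV _ hb₂ c _ (by linarith) fun z => ?_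
    have := abs_le.1 (hbc₂ z)
    exact abs_le.2 ⟨by linarith, by linarith⟩
  have n2 : ‖blk (rc b₁ V) 0 0 (rc b₂ V) - (c : ℂ) • 1‖ ≤ Real.pi + 1 / 10 := by
    rw [blk_sub_smul]
    exact norm_blk_diag_le _ _ _ m1 m2
  exact key_core f hf M hM hlip U V (normal_of_unitary hU) (normal_of_unitary hV)
    (rc a U) (rc χ U) (blk (rc b₁ V) 0 0 (rc b₂ V)) (row (rc ψ₁ V) (rc ψ₂ V))
    (rc_sa _ _) (blk_diag_sa _ _ (rc_sa _ _) (rc_sa _ _))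
    (row_norm _ _ (rc_sa _ _) (rc_sa _ _) hsum) hP
    (row_adj _ _ (rc_sa _ _) (rc_sa _ _) hsum)
    (fun F hF => hid_aux U V hU a b₁ b₂ χ ψ₁ ψ₂ ha F hF
      (loc_cfc hV b₁ ψ₁ hb₁ hψ₁ (fun z hz hz2 => hbe₁ z hz (hs₁ z hz2)) F hF)
      (loc_cfc hV b₂ ψ₂ hb₂ hψ₂ (fun z hz hz2 => hbe₂ z hz (hs₂ z hz2)) F hF)
      (loc_cfc hU a χ ha hχ (fun z hz hz2 => hae z hz (hsupp z hz hz2)) F hF))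
    _ (by linarith) (by nlinarith) (hL_aux _ _ c _ _ n1 n2)

/-- A four-piece quadratic partition of unity on the circle. -/
theorem partition4 : ∃ (χ : Fin 4 → ℂ → ℝ) (c : Fin 4 → ℝ), (∀ i, Continuous (χ i)) ∧
    (∀ i z, |χ i z| ≤ 1) ∧ (∀ z : ℂ, ‖z‖ = 1 → ∑ i, χ i z * χ i z = 1) ∧
    (∀ i, ∀ z : ℂ, ‖z‖ = 1 → χ i z ≠ 0 →
      Real.cos (4 / 5) ≤ (z * Complex.exp (-(Complex.I * c i))).re) := by
  have hcos : Real.cos (4 / 5) ≤ 703 / 1000 := by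
    have := (abs_le.1 (Real.cos_bound (x := 4 / 5) (by norm_num [abs_le]))).2
    norm_num [abs_of_pos] at this ⊢
    linarith
  let c : Fin 4 → ℝ := ![0, Real.pi / 2, Real.pi, -(Real.pi / 2)]
  let l : Fin 4 → ℂ → ℝ := fun i z => (z * Complex.exp (-(Complex.I * c i))).re
  have hl : ∀ i, Continuous (l i) := fun i => by fun_prop
  have l0 : ∀ z, l 0 z = z.re := fun z => by simp [l, c]
  have l1 : ∀ z, l 1 z = z.im := fun z => by
    simp [l, c, mul_comm Complex.I, Complex.exp_neg]
  have l2 : ∀ z, l 2 z = -z.re := fun z => by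
    simp [l, c, mul_comm Complex.I, Complex.exp_neg]
  have l3 : ∀ z, l 3 z = -z.im := fun z => by
    simp [l, c, mul_comm Complex.I]
  let q : Fin 4 → ℂ → ℝ := fun i z => max (l i z - 703 / 1000) 0
  have hq : ∀ i, Continuous (q i) := fun i => by fun_prop
  let S : ℂ → ℝ := fun z => max (∑ i, q i z * q i z) ((1 / 1000) ^ 2)
  have hS : ∀ z, 0 < S z := fun z => lt_max_of_lt_right (by norm_num)
  have hSc : Continuous S := by fun_prop
  have hle : ∀ i z, q i z * q i z ≤ S z := fun i z =>
    (Finset.single_le_sum (f := fun i => q i z * q i z) (fun j _ => mul_self_nonneg _)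
      (Finset.mem_univ i)).trans (le_max_left _ _)
  have hSu : ∀ z : ℂ, ‖z‖ = 1 → S z = ∑ i, q i z * q i z := by
    intro z hz
    refine max_eq_left ?_
    have h1 : z.re * z.re + z.im * z.im = 1 := by
      have := Complex.normSq_eq_norm_sq z
      rw [hz, Complex.normSq_apply] at this
      linarith
    have : ∃ i, 704 / 1000 ≤ l i z := by
      by_contra! hlt
      have a0 := hlt 0
      have a1 := hlt 1
      have a2 := hlt 2
      have a3 := hlt 3
      rw [l0] at a0
      rw [l1] at a1
      rw [l2] at a2
      rw [l3] at a3
      nlinarith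
    obtain ⟨i, hi⟩ := this
    have h2 : 1 / 1000 ≤ q i z := le_max_of_le_left (by linarith)
    refine le_trans ?_ (Finset.single_le_sum (f := fun i => q i z * q i z)
      (fun j _ => mul_self_nonneg _) (Finset.mem_univ i))
    nlinarith
  refine ⟨fun i z => q i z / Real.sqrt (S z), c, fun i => (hq i).div (by fun_prop)
    (fun z => (Real.sqrt_pos.2 (hS z)).ne'), fun i z => ?_, fun z hz => ?_, fun i z hz hne => ?_⟩
  · rw [abs_div, abs_of_nonneg (Real.sqrt_nonneg _), div_le_one (Real.sqrt_pos.2 (hS z))]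
    refine Real.le_sqrt_of_sq_le ?_
    rw [sq_abs, sq]
    exact hle i z
  · simp only [div_mul_div_comm, Real.mul_self_sqrt (hS z).le]
    rw [← Finset.sum_div, ← hSu z hz, div_self (hS z).ne']
  · by_contra! hlt
    refine hne ?_
    have : q i z = 0 := max_eq_right (by change l i z - _ ≤ 0; linarith)
    simp [this]

end
end OpLip

/-- Transfer of operator Lipschitzness from the line to the circle: let
`f : ℂ → ℂ` be continuous and `g(z) = f (exp (i z))`. If
`‖g(A) - g(B)‖ ≤ M * ‖A - B‖` for all bounded self-adjoint operators `A`, `B`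
on any complex Hilbert space (i.e. `x ↦ f (e^{ix})` is operator Lipschitz on
`ℝ` with constant `M`), then `‖f(U) - f(V)‖ ≤ (3√2 π / 2) * M * ‖U - V‖` for
all unitary operators `U`, `V` on any complex Hilbert space. -/
theorem stmt_19 (f : ℂ → ℂ) (hf : Continuous f) (M : ℝ) (hM : 0 ≤ M)
    (hlip : ∀ (H : Type) [NormedAddCommGroup H] [InnerProductSpace ℂ H] [CompleteSpace H]
      (A B : H →L[ℂ] H), IsSelfAdjoint A → IsSelfAdjoint B →
      ‖cfc (fun z : ℂ => f (Complex.exp (Complex.I * z))) A -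
          cfc (fun z : ℂ => f (Complex.exp (Complex.I * z))) B‖ ≤ M * ‖A - B‖) :
    ∀ (H : Type) [NormedAddCommGroup H] [InnerProductSpace ℂ H] [CompleteSpace H]
      (U V : H →L[ℂ] H), U ∈ unitary (H →L[ℂ] H) → V ∈ unitary (H →L[ℂ] H) →
      ‖cfc f U - cfc f V‖ ≤ (3 * Real.sqrt 2 * Real.pi / 2) * M * ‖U - V‖ := by
  intro H _ _ _ U V hU hV
  obtain ⟨χ, c, hχ, hχ1, hsum, hsupp⟩ := OpLip.partition4
  set Z := cfc f U - cfc f V with hZ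
  set D := M * ‖U - V‖ with hD
  have hD0 : 0 ≤ D := by positivity
  have hpi := Real.pi_gt_three
  have hpi2 := Real.pi_lt_d4
  have hpi3 := Real.pi_gt_d4
  set k := 1 - (4 / 5 + (Real.pi + 1 / 10)) ^ 2 / 24 with hk
  have hk1 : 319 / 1000 ≤ k := by nlinarith
  have hkey : ∀ i, ‖OpLip.rc (χ i) U * Z‖ ≤ 3135 / 1000 * D := by
    intro i
    have h := OpLip.key f hf M hM hlip U V hU hV (c i) (χ i) (hχ i) (hχ1 i) (hsupp i)
    nlinarith [norm_nonneg (OpLip.rc (χ i) U * Z)]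
  have hone : ∑ i, OpLip.rc (χ i) U * OpLip.rc (χ i) U = 1 := by
    have hn := OpLip.normal_of_unitary hU
    have hc : ∀ i, Continuous (fun z => (χ i z : ℂ)) := fun i => by
      have := hχ i
      fun_prop
    have h1 : ∀ i, OpLip.rc (χ i) U * OpLip.rc (χ i) U =
        cfc (fun z => (χ i z : ℂ) * (χ i z : ℂ)) U := fun i => by
      rw [OpLip.rc, ← cfc_mul _ _ U (hc i).continuousOn (hc i).continuousOn]
    simp only [h1]
    rw [← cfc_sum_univ (fun i z => (χ i z : ℂ) * (χ i z : ℂ)) U (fun i => ((hc i).mul (hc i)).continuousOn), ← cfc_one ℂ U]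
    refine cfc_congr fun z hz => ?_
    have := hsum z (OpLip.norm_unit hU hz)
    simp only [Finset.sum_apply, Pi.one_apply]
    exact_mod_cast this
  have hZZ : star Z * Z = ∑ i, star (OpLip.rc (χ i) U * Z) * (OpLip.rc (χ i) U * Z) := by
    calc star Z * Z = star Z * (∑ i, OpLip.rc (χ i) U * OpLip.rc (χ i) U) * Z := by
          rw [hone, mul_one]
      _ = _ := by
        rw [Finset.mul_sum, Finset.sum_mul]
        refine Finset.sum_congr rfl fun i _ => ?_
        rw [star_mul, (OpLip.rc_sa (χ i) U).star_eq]
        simp only [mul_assoc]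
  have hsq : ‖Z‖ * ‖Z‖ ≤ (2 * (3135 / 1000 * D)) * (2 * (3135 / 1000 * D)) := by
    rw [← CStarRing.norm_star_mul_self, hZZ]
    calc _ ≤ ∑ i : Fin 4, ‖star (OpLip.rc (χ i) U * Z) * (OpLip.rc (χ i) U * Z)‖ :=
          norm_sum_le _ _
      _ ≤ ∑ i : Fin 4, (3135 / 1000 * D) * (3135 / 1000 * D) := by
        refine Finset.sum_le_sum fun i _ => ?_
        rw [CStarRing.norm_star_mul_self]
        exact mul_self_le_mul_self (norm_nonneg _) (hkey i)
      _ = _ := by simp; ring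
  have hfin : ‖Z‖ ≤ 2 * (3135 / 1000 * D) := by
    exact (mul_self_le_mul_self_iff (norm_nonneg _) (by positivity)).2 hsq
  have hs2 : 1.414 ≤ Real.sqrt 2 := Real.le_sqrt_of_sq_le (by norm_num)
  have hconst : 627 / 100 ≤ 3 * Real.sqrt 2 * Real.pi / 2 := by nlinarith
  calc ‖Z‖ ≤ 627 / 100 * D := by linarith
    _ ≤ (3 * Real.sqrt 2 * Real.pi / 2) * D := by gcongr
    _ = _ := by rw [hD]; ring
end
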